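/- arXiv:math/0512202 — 4 statements merged into one kernel-verified Lean document; each statement's English description precedes it below -/
import Mathlib

section
/- Let R be a finite-dimensional graded simple algebra over a field F. Then every nonzero graded right ideal I of R satisfies I = bR for some homogeneous idempotent b ∈ I. -/
/-!
Graded simplicity enters only through graded semiprimeness: no nonzero graded right ideal squares to
zero. A minimal graded right ideal `M` then has a homogeneous `a ∈ M` with `aM ≠ 0`, so `aM = M` by
minimality, `a = ac` for some `c ∈ M` of degree `1`, and `c² - c` lies in the graded right ideal
`{x ∈ M | ax = 0}`, which is zero by minimality; this is Brauer's lemma. If `c` is a nonzero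
idempotent of degree `1` in `I` and `d` acts as a left identity on `K = {x ∈ I | cx = 0} < I`, then
`b = c + d - dc` acts as a left identity on `I`, because `x - cx ∈ K` for `x ∈ I`. The descending
chain condition on graded right ideals makes this an induction.
-/

open DirectSum

section HomogeneousMap

variable {ι M σ : Type*} [DecidableEq ι] [AddCommMonoid M] [SetLike σ M] [AddSubmonoidClass σ M]
  (ℳ : ι → σ) [Decomposition ℳ]
  {κ N τ : Type*} [DecidableEq κ] [AddCommMonoid N] [SetLike τ N] [AddSubmonoidClass τ N]
  (𝒩 : κ → τ) [Decomposition 𝒩]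
  {E : Type*} [FunLike E M N] [AddMonoidHomClass E M N] (f : E) {φ : ι → κ}

theorem decompose_map_apply (hf : ∀ i, ∀ x ∈ ℳ i, f x ∈ 𝒩 (φ i)) (hφ : φ.Injective)
    (x : M) (i : ι) : (decompose 𝒩 (f x) (φ i) : N) = f (decompose ℳ x i) := by
  induction x using Decomposition.inductionOn ℳ with
  | zero => simp
  | @homogeneous j x =>
    obtain rfl | hji := eq_or_ne j i
    · rw [decompose_of_mem_same 𝒩 (hf j x x.2), decompose_of_mem_same ℳ x.2]
    · rw [decompose_of_mem_ne 𝒩 (hf j x x.2) (hφ.ne hji), decompose_of_mem_ne ℳ x.2 hji, map_zero]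
  | add x y hx hy => simp [decompose_add, hx, hy]

theorem decompose_map_eq_zero_of_notMem_range (hf : ∀ i, ∀ x ∈ ℳ i, f x ∈ 𝒩 (φ i)) (x : M)
    {j : κ} (hj : j ∉ Set.range φ) : (decompose 𝒩 (f x) j : N) = 0 := by
  induction x using Decomposition.inductionOn ℳ with
  | zero => simp
  | @homogeneous i x => exact decompose_of_mem_ne 𝒩 (hf i x x.2) fun hij => hj ⟨i, hij⟩
  | add x y hx hy => simp [decompose_add, hx, hy]

theorem map_decompose_eq_zero (hf : ∀ i, ∀ x ∈ ℳ i, f x ∈ 𝒩 (φ i)) (hφ : φ.Injective)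
    {x : M} (hx : f x = 0) (i : ι) : f (decompose ℳ x i) = 0 := by
  simp [← decompose_map_apply ℳ 𝒩 f hf hφ, hx]

theorem decompose_map_mem_image (hf : ∀ i, ∀ x ∈ ℳ i, f x ∈ 𝒩 (φ i)) (hφ : φ.Injective)
    {P : Type*} [SetLike P M] [ZeroMemClass P M] {p : P} (hp : SetLike.IsHomogeneous ℳ p)
    {x : M} (hx : x ∈ p) (j : κ) : (decompose 𝒩 (f x) j : N) ∈ f '' (p : Set M) := by
  by_cases hj : j ∈ Set.range φ
  · obtain ⟨i, rfl⟩ := hj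
    exact ⟨_, hp i hx, (decompose_map_apply ℳ 𝒩 f hf hφ x i).symm⟩
  · exact ⟨0, zero_mem p, by rw [map_zero, decompose_map_eq_zero_of_notMem_range ℳ 𝒩 f hf x hj]⟩

theorem exists_map_decompose_ne_zero {x : M} (hx : f x ≠ 0) : ∃ i, f (decompose ℳ x i) ≠ 0 := by
  classical
  rw [← sum_support_decompose ℳ x, map_sum] at hx
  obtain ⟨i, -, hi⟩ := Finset.exists_ne_zero_of_sum_ne_zero hx
  exact ⟨i, hi⟩

end HomogeneousMap

section GradedRing

variable {G k R σ : Type*} [DecidableEq G] [Ring k] [NonUnitalRing R] [Module k R]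
  [SetLike σ R] [AddSubmonoidClass σ R] (ℬ : G → σ) [Decomposition ℬ]

/-- Graded right ideals of a possibly non-unital `k`-algebra, as homogeneous `k`-submodules closed
under right multiplication. Without a unit, stability under scalars is not automatic. -/
structure IsGradedRightIdeal (I : Submodule k R) : Prop where
  mul_mem : ∀ ⦃x⦄, x ∈ I → ∀ r, x * r ∈ I
  isHomogeneous : SetLike.IsHomogeneous ℬ I

variable (k) in
/-- Graded semiprimeness: only the zero graded right ideal squares to zero. -/
def IsGradedSemiprime : Prop :=
  ∀ M : Submodule k R, IsGradedRightIdeal ℬ M → (∀ x ∈ M, ∀ y ∈ M, x * y = 0) → M = ⊥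

/-- Graded simplicity: the multiplication is nonzero and the graded two-sided ideals are trivial. -/
structure IsGradedSimple : Prop where
  exists_mul_ne_zero : ∃ x y : R, x * y ≠ 0
  eq_bot_or_eq_top : ∀ J : TwoSidedIdeal R, SetLike.IsHomogeneous ℬ J → J = ⊥ ∨ J = ⊤

variable {ℬ}

section LeftCancel

variable [Mul G] [IsLeftCancelMul G]
  (hmul : ∀ g h : G, ∀ x ∈ ℬ g, ∀ y ∈ ℬ h, x * y ∈ ℬ (g * h))
include hmul

theorem decompose_mul_of_left_mem {g : G} {a : R} (ha : a ∈ ℬ g) (x : R) (h : G) :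
    (decompose ℬ (a * x) (g * h) : R) = a * decompose ℬ x h :=
  decompose_map_apply ℬ ℬ (AddMonoidHom.mulLeft a) (fun h x hx => hmul g h a ha x hx)
    (mul_right_injective g) x h

theorem mul_decompose_eq_zero {g : G} {a : R} (ha : a ∈ ℬ g) {x : R} (hx : a * x = 0) (h : G) :
    a * (decompose ℬ x h : R) = 0 :=
  map_decompose_eq_zero ℬ ℬ (AddMonoidHom.mulLeft a) (fun h x hx => hmul g h a ha x hx)
    (mul_right_injective g) hx h

variable [SMulCommClass k R R] {M : Submodule k R}

theorem IsGradedRightIdeal.inf_ker_mulLeft (hM : IsGradedRightIdeal ℬ M) {g : G} {a : R}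
    (ha : a ∈ ℬ g) : IsGradedRightIdeal ℬ (M ⊓ (LinearMap.mulLeft k a).ker) where
  mul_mem := by
    rintro x ⟨hxM, hax : a * x = 0⟩ r
    exact ⟨hM.mul_mem hxM r, show a * (x * r) = 0 by rw [← mul_assoc, hax, zero_mul]⟩
  isHomogeneous := fun h x ⟨hxM, hax⟩ =>
    ⟨hM.isHomogeneous h hxM, mul_decompose_eq_zero hmul ha hax h⟩

theorem IsGradedRightIdeal.map_mulLeft (hM : IsGradedRightIdeal ℬ M) {g : G} {a : R}
    (ha : a ∈ ℬ g) : IsGradedRightIdeal ℬ (M.map (LinearMap.mulLeft k a)) where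
  mul_mem := by
    rintro _ ⟨x, hx, rfl⟩ r
    exact ⟨x * r, hM.mul_mem hx r, (mul_assoc a x r).symm⟩
  isHomogeneous := by
    rintro h _ ⟨x, hx, rfl⟩
    exact decompose_map_mem_image ℬ ℬ (LinearMap.mulLeft k a)
      (fun h x hx => hmul g h a ha x hx) (mul_right_injective g) hM.isHomogeneous hx h

end LeftCancel

section Simple

variable [Mul G] (hmul : ∀ g h : G, ∀ x ∈ ℬ g, ∀ y ∈ ℬ h, x * y ∈ ℬ (g * h))
include hmul

theorem decompose_mul_eq_zero [IsRightCancelMul G] {g : G} {a : R} (ha : a ∈ ℬ g) {x : R}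
    (hx : x * a = 0) (h : G) : (decompose ℬ x h : R) * a = 0 :=
  map_decompose_eq_zero ℬ ℬ (AddMonoidHom.mulRight a) (fun h x hx => hmul h g x hx a ha)
    (mul_left_injective g) hx h

theorem IsGradedSimple.eq_zero_of_forall_mul_eq_zero [IsRightCancelMul G]
    (hR : IsGradedSimple ℬ) {x : R} (hx : ∀ r, x * r = 0) : x = 0 := by
  let A : TwoSidedIdeal R := .ker (NonUnitalAlgHom.lmul ℤ R)
  have mem_A (y : R) : y ∈ A ↔ ∀ r, y * r = 0 := by
    simp [A, TwoSidedIdeal.mem_ker, LinearMap.ext_iff]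
  have hA : SetLike.IsHomogeneous ℬ A := by
    intro g y hy
    rw [mem_A] at hy ⊢
    intro r
    by_contra hyr
    obtain ⟨h, hh⟩ := exists_map_decompose_ne_zero ℬ (AddMonoidHom.mulLeft _) hyr
    exact hh (decompose_mul_eq_zero hmul (SetLike.coe_mem _) (hy _) g)
  obtain hbot | htop := hR.eq_bot_or_eq_top A hA
  · simpa [hbot] using (mem_A x).2 hx
  · obtain ⟨y, z, hyz⟩ := hR.exists_mul_ne_zero
    exact absurd ((mem_A y).1 (htop ▸ TwoSidedIdeal.mem_top R) z) hyz

theorem IsGradedSimple.isGradedSemiprime [IsCancelMul G] (hR : IsGradedSimple ℬ) :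
    IsGradedSemiprime k ℬ := by
  intro M hM hMM
  let J : TwoSidedIdeal R := .mk' {x | ∀ m ∈ M, m * x = 0}
    (fun _ _ => mul_zero _)
    (fun hx hy m hm => by rw [mul_add, hx m hm, hy m hm, add_zero])
    (fun hx m hm => by rw [mul_neg, hx m hm, neg_zero])
    (fun {x _} hy m hm => by rw [← mul_assoc, hy _ (hM.mul_mem hm x)])
    (fun hx m hm => by rw [← mul_assoc, hx m hm, zero_mul])
  have mem_J (x : R) : x ∈ J ↔ ∀ m ∈ M, m * x = 0 := TwoSidedIdeal.mem_mk' ..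
  have hJ : SetLike.IsHomogeneous ℬ J := by
    intro g x hx
    rw [mem_J] at hx ⊢
    intro m hm
    by_contra hmx
    obtain ⟨h, hh⟩ := exists_map_decompose_ne_zero ℬ (AddMonoidHom.mulRight _) hmx
    exact hh (mul_decompose_eq_zero hmul (SetLike.coe_mem _) (hx _ (hM.isHomogeneous h hm)) g)
  refine (Submodule.eq_bot_iff M).2 fun m hm => ?_
  obtain hbot | htop := hR.eq_bot_or_eq_top J hJ
  · simpa [hbot] using (mem_J m).2 fun x hx => hMM x hx m hm
  · exact hR.eq_zero_of_forall_mul_eq_zero hmul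
      fun r => (mem_J r).1 (htop ▸ TwoSidedIdeal.mem_top R) m hm

end Simple

theorem IsGradedSemiprime.exists_homogeneous_mul_ne_zero (hR : IsGradedSemiprime k ℬ)
    {M : Submodule k R} (hM : IsGradedRightIdeal ℬ M) (hM0 : M ≠ ⊥) :
    ∃ g, ∃ a ∈ M, a ∈ ℬ g ∧ ∃ m ∈ M, a * m ≠ 0 := by
  obtain ⟨x, hx, m, hm, hxm⟩ : ∃ x ∈ M, ∃ m ∈ M, x * m ≠ 0 := by
    by_contra! hMM
    exact hM0 (hR M hM hMM)
  obtain ⟨g, hg⟩ := exists_map_decompose_ne_zero ℬ (AddMonoidHom.mulRight m) hxm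
  exact ⟨g, _, hM.isHomogeneous g hx, SetLike.coe_mem _, m, hm, hg⟩

section Idempotent

variable [LeftCancelMonoid G] [SMulCommClass k R R]
  (hmul : ∀ g h : G, ∀ x ∈ ℬ g, ∀ y ∈ ℬ h, x * y ∈ ℬ (g * h))
include hmul

theorem exists_isIdempotentElem_of_minimal {M : Submodule k R}
    (hM : Minimal (fun N : Submodule k R => IsGradedRightIdeal ℬ N ∧ N ≠ ⊥) M)
    {g : G} {a m : R} (ha : a ∈ M) (hag : a ∈ ℬ g) (hm : m ∈ M) (ham : a * m ≠ 0) :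
    ∃ c ∈ M, c ∈ ℬ 1 ∧ IsIdempotentElem c ∧ c ≠ 0 := by
  have hMr := hM.prop.1
  have map_eq : M.map (LinearMap.mulLeft k a) = M := by
    refine hM.eq_of_le ⟨hMr.map_mulLeft hmul hag, ?_⟩ ?_
    · exact (Submodule.ne_bot_iff _).2 ⟨a * m, ⟨m, hm, rfl⟩, ham⟩
    · rintro _ ⟨x, -, rfl⟩
      exact hMr.mul_mem ha x
  have inf_ker_eq_bot : M ⊓ (LinearMap.mulLeft k a).ker = ⊥ := by
    by_contra hne
    have hle := hM.le_of_le ⟨hMr.inf_ker_mulLeft hmul hag, hne⟩ inf_le_left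
    exact ham (hle hm).2
  obtain ⟨y, hy, hay : a * y = a⟩ := map_eq ▸ ha
  obtain ⟨c, hcM, hc1, hac⟩ : ∃ c ∈ M, c ∈ ℬ 1 ∧ a * c = a := by
    refine ⟨decompose ℬ y 1, hMr.isHomogeneous 1 hy, SetLike.coe_mem _, ?_⟩
    rw [← decompose_mul_of_left_mem hmul hag, hay, mul_one, decompose_of_mem_same ℬ hag]
  have hcc : c * c - c ∈ M ⊓ (LinearMap.mulLeft k a).ker := by
    refine ⟨M.sub_mem (hMr.mul_mem hcM c) hcM, show a * (c * c - c) = 0 from ?_⟩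
    rw [mul_sub, ← mul_assoc, hac, hac, sub_self]
  rw [inf_ker_eq_bot, Submodule.mem_bot, sub_eq_zero] at hcc
  refine ⟨c, hcM, hc1, hcc, ?_⟩
  rintro rfl
  exact ham (by rw [← hac, mul_zero, zero_mul])

theorem IsGradedSemiprime.exists_isIdempotentElem_ne_zero (hR : IsGradedSemiprime k ℬ)
    (hdcc : {M : Submodule k R | IsGradedRightIdeal ℬ M}.IsWF)
    {I : Submodule k R} (hI : IsGradedRightIdeal ℬ I) (hI0 : I ≠ ⊥) :
    ∃ c ∈ I, c ∈ ℬ 1 ∧ IsIdempotentElem c ∧ c ≠ 0 := by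
  have hwf : {M : Submodule k R | (IsGradedRightIdeal ℬ M ∧ M ≠ ⊥) ∧ M ≤ I}.IsWF :=
    hdcc.mono fun M hM => hM.1.1
  obtain ⟨M, hM⟩ := hwf.exists_minimal ⟨I, ⟨hI, hI0⟩, le_rfl⟩
  have hMmin : Minimal (fun N : Submodule k R => IsGradedRightIdeal ℬ N ∧ N ≠ ⊥) M :=
    ⟨hM.prop.1, fun N hN hNM => hM.le_of_le ⟨hN, hNM.trans hM.prop.2⟩ hNM⟩
  obtain ⟨g, a, ha, hag, m, hm, ham⟩ := hR.exists_homogeneous_mul_ne_zero hM.prop.1.1 hM.prop.1.2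
  obtain ⟨c, hcM, hc⟩ := exists_isIdempotentElem_of_minimal hmul hMmin ha hag hm ham
  exact ⟨c, hM.prop.2 hcM, hc⟩

end Idempotent

theorem IsGradedSemiprime.exists_left_identity [LeftCancelMonoid G] [SMulCommClass k R R]
    {τ : Type*} [SetLike τ R] [AddSubgroupClass τ R] {𝒜 : G → τ} [Decomposition 𝒜]
    (hmul : ∀ g h : G, ∀ x ∈ 𝒜 g, ∀ y ∈ 𝒜 h, x * y ∈ 𝒜 (g * h)) (hR : IsGradedSemiprime k 𝒜)
    (hdcc : {M : Submodule k R | IsGradedRightIdeal 𝒜 M}.IsWF)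
    {I : Submodule k R} (hI : IsGradedRightIdeal 𝒜 I) :
    ∃ b ∈ I, b ∈ 𝒜 1 ∧ ∀ x ∈ I, b * x = x := by
  refine hdcc.induction (P := fun I => ∃ b ∈ I, b ∈ 𝒜 1 ∧ ∀ x ∈ I, b * x = x) hI ?_
  intro I (hI : IsGradedRightIdeal 𝒜 I) ih
  obtain rfl | hI0 := eq_or_ne I ⊥
  · exact ⟨0, zero_mem _, zero_mem _, fun x hx => by simp [(Submodule.mem_bot k).1 hx]⟩
  obtain ⟨c, hcI, hc1, hcc, hc0⟩ := hR.exists_isIdempotentElem_ne_zero hmul hdcc hI hI0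
  have hlt : I ⊓ (LinearMap.mulLeft k c).ker < I :=
    inf_lt_left.2 fun hle => hc0 (hcc.symm.trans (hle hcI))
  obtain ⟨d, ⟨hdI, -⟩, hd1, hd⟩ := ih _ (hI.inf_ker_mulLeft hmul hc1) hlt
  refine ⟨c + d - d * c, I.sub_mem (I.add_mem hcI hdI) (hI.mul_mem hdI c), ?_, fun x hx => ?_⟩
  · exact sub_mem (add_mem hc1 hd1) (mul_one (1 : G) ▸ hmul 1 1 d hd1 c hc1)
  · have hxc : x - c * x ∈ I ⊓ (LinearMap.mulLeft k c).ker := by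
      refine ⟨I.sub_mem hx (hI.mul_mem hcI x), show c * (x - c * x) = 0 from ?_⟩
      rw [mul_sub, ← mul_assoc, hcc.eq, sub_self]
    calc (c + d - d * c) * x = c * x + d * (x - c * x) := by noncomm_ring
      _ = x := by rw [hd _ hxc, add_sub_cancel]

end GradedRing

theorem stmt_1_general {G : Type*} [LeftCancelMonoid G] [DecidableEq G] {k : Type*} [Ring k]
    {R : Type*} [NonUnitalRing R] [Module k R] [SMulCommClass k R R]
    {σ : Type*} [SetLike σ R] [AddSubgroupClass σ R] (ℬ : G → σ) [Decomposition ℬ]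
    (hmul : ∀ g h : G, ∀ x ∈ ℬ g, ∀ y ∈ ℬ h, x * y ∈ ℬ (g * h))
    (hR : IsGradedSemiprime k ℬ) (hdcc : {M : Submodule k R | IsGradedRightIdeal ℬ M}.IsWF)
    {I : Submodule k R} (hI : IsGradedRightIdeal ℬ I) :
    ∃ b ∈ I, b ∈ ℬ 1 ∧ b * b = b ∧ ∀ x : R, x ∈ I ↔ ∃ r : R, x = b * r := by
  obtain ⟨b, hbI, hb1, hb⟩ := hR.exists_left_identity hmul hdcc hI
  refine ⟨b, hbI, hb1, hb b hbI, fun x => ⟨fun hx => ⟨x, (hb x hx).symm⟩, ?_⟩⟩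
  rintro ⟨r, rfl⟩
  exact hI.mul_mem hbI r

/-- In a finite-dimensional graded simple algebra, every nonzero graded right ideal
is of the form `bR` for a homogeneous idempotent `b` belonging to it. -/
theorem stmt_1 {G : Type*} [Group G] [DecidableEq G] {F : Type*} [Field F]
    {R : Type*} [NonUnitalRing R] [Module F R] [SMulCommClass F R R] [IsScalarTower F R R]
    [FiniteDimensional F R]
    (ℬ : G → Submodule F R) [DirectSum.Decomposition ℬ]
    (hmul : ∀ g h : G, ∀ x ∈ ℬ g, ∀ y ∈ ℬ h, x * y ∈ ℬ (g * h))
    -- `R` is graded simple: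
    (hR2 : ∃ x y : R, x * y ≠ 0)
    (hsimple : ∀ J : TwoSidedIdeal R,
      (∀ x ∈ J, ∀ g : G, ((DirectSum.decompose ℬ x) g : R) ∈ J) → J = ⊥ ∨ J = ⊤)
    -- `I` is a nonzero graded right ideal:
    (I : Submodule F R)
    (hIr : ∀ x ∈ I, ∀ r : R, x * r ∈ I)
    (hIgr : ∀ x ∈ I, ∀ g : G, ((DirectSum.decompose ℬ x) g : R) ∈ I)
    (hIne : I ≠ ⊥) :
    ∃ b ∈ I, (∃ g : G, b ∈ ℬ g) ∧ b * b = b ∧ ∀ x : R, x ∈ I ↔ ∃ r : R, x = b * r := by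
  have hR : IsGradedSimple ℬ := ⟨hR2, fun J hJ => hsimple J fun x hx g => hJ g hx⟩
  obtain ⟨b, hbI, hb1, hb⟩ := stmt_1_general ℬ hmul (hR.isGradedSemiprime hmul)
    (Set.IsWF.of_wellFoundedLT _) (I := I) ⟨hIr, fun g x hx => hIgr x hx g⟩
  exact ⟨b, hbI, ⟨1, hb1⟩, hb⟩
end

section
/- Let R be a G-graded ring with finite support such that R has no nonzero nilpotent (two-sided) ideals. If I is a nilpotent ideal of the identity component R_e, then the two-sided ideal RIR of R is nilpotent; consequently I = 0 and R_e has no nonzero nilpotent ideals. -/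
open Pointwise

/-!
Let `S` be a finite set containing `1` and the support of the grading, and let `Iᵐ = 0`. The left
ideal `RI` is the sum of its words `R_{g₁} I ⋯ R_{gₙ} I`. If such a word is nonzero, then so are its
suffixes, hence the suffix products `gⱼ ⋯ gₙ` all lie in `S`. Once `n ≥ |S| m`, more than `m` of the
`n + 1` suffix products agree. Between two consecutive occurrences of the same suffix product the
letters multiply to `1`, so that stretch of the word lies in `R_e I ⊆ I`, and a suffix of the word
lies in `Iᵐ R = 0`. Hence `(RI)ⁿ = 0`, and `RIR = (RI)R` is nilpotent because `R(RI) = RI` is.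
-/

theorem isNilpotent_mul_swap {M : Type*} [MonoidWithZero M] {a b : M} (h : IsNilpotent (a * b)) :
    IsNilpotent (b * a) := by
  obtain ⟨n, hn⟩ := h
  exact ⟨n + 1, by rw [pow_succ, ← mul_assoc, mul_pow_mul, hn, mul_zero, zero_mul]⟩

theorem isNilpotent_iff_exists_coe_pow_subset {k A : Type*} [CommSemiring k] [Semiring A]
    [Algebra k A] {M : Submodule k A} :
    IsNilpotent M ↔ ∃ n : ℕ, 0 < n ∧ (M : Set A) ^ n ⊆ {0} := by
  have pow_eq_zero_iff_coe_pow_subset (n : ℕ) : M ^ n = 0 ↔ (M : Set A) ^ n ⊆ {0} := by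
    rw [Submodule.pow_eq_span_pow_set, Submodule.zero_eq_bot, Submodule.span_eq_bot]
    rfl
  simp only [← pow_eq_zero_iff_coe_pow_subset]
  exact ⟨fun ⟨n, hn⟩ ↦ ⟨n + 1, n.succ_pos, by rw [pow_succ, hn, zero_mul]⟩,
    fun ⟨n, _, hn⟩ ↦ ⟨n, hn⟩⟩

theorem exists_lt_count_of_card_mul_lt_length {α : Type*} [DecidableEq α] {S : Finset α}
    {l : List α} {m : ℕ} (hS : ∀ a ∈ l, a ∈ S) (hl : S.card * m < l.length) :
    ∃ a, m < l.count a := by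
  have hsum : ∑ _a ∈ S, m < ∑ a ∈ S, (l : Multiset α).count a := by
    rwa [Multiset.sum_count_eq_card (by simpa using hS), Finset.sum_const, smul_eq_mul]
  obtain ⟨a, -, ha⟩ := Finset.exists_lt_of_sum_lt hsum
  exact ⟨a, by simpa using ha⟩

section WordProd

variable {G k A : Type*} [CommSemiring k] [Semiring A] [Algebra k A]

/-- The product `𝒜 g₁ * I * ⋯ * 𝒜 gₙ * I` attached to the word `[g₁, …, gₙ]`; these products span
the powers of the left ideal generated by `I` when the `𝒜 g` span the whole algebra. -/
def wordProd (𝒜 : G → Submodule k A) (I : Submodule k A) (l : List G) : Submodule k A :=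
  (l.map fun g ↦ 𝒜 g * I).prod

variable {𝒜 : G → Submodule k A} {I : Submodule k A}

theorem wordProd_cons (g : G) (l : List G) :
    wordProd 𝒜 I (g :: l) = 𝒜 g * I * wordProd 𝒜 I l := by
  simp [wordProd]

theorem wordProd_append (l₁ l₂ : List G) :
    wordProd 𝒜 I (l₁ ++ l₂) = wordProd 𝒜 I l₁ * wordProd 𝒜 I l₂ := by
  simp [wordProd]

theorem wordProd_eq_bot_of_suffix {l₁ l₂ : List G} (h : l₁ <:+ l₂) (h₁ : wordProd 𝒜 I l₁ = ⊥) :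
    wordProd 𝒜 I l₂ = ⊥ := by
  obtain ⟨l, rfl⟩ := h
  rw [wordProd_append, h₁, Submodule.mul_bot]

theorem iSup_mul_pow_le_iSup_wordProd (n : ℕ) :
    ((⨆ g, 𝒜 g) * I) ^ n ≤ ⨆ (l : List G) (_ : l.length = n), wordProd 𝒜 I l := by
  induction n with
  | zero => exact le_iSup₂_of_le [] rfl (by simp [wordProd])
  | succ n ih =>
    calc ((⨆ g, 𝒜 g) * I) ^ (n + 1)
        = (⨆ g, 𝒜 g * I) * ((⨆ g, 𝒜 g) * I) ^ n := by rw [pow_succ', Submodule.iSup_mul]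
      _ ≤ (⨆ g, 𝒜 g * I) * ⨆ (l : List G) (_ : l.length = n), wordProd 𝒜 I l := by gcongr
      _ ≤ _ := by
        simp only [Submodule.iSup_mul, Submodule.mul_iSup, ← wordProd_cons]
        exact iSup₂_le fun l hl ↦ iSup_le fun g ↦ le_iSup₂_of_le (g :: l) (by simp [hl]) le_rfl

variable [Monoid G]

theorem wordProd_cons_le (hmul : ∀ g h, 𝒜 g * 𝒜 h ≤ 𝒜 (g * h)) (hI : I ≤ 𝒜 1) (g : G)
    (l : List G) : wordProd 𝒜 I (g :: l) ≤ 𝒜 (g :: l).prod * I := by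
  induction l generalizing g with
  | nil => simp [wordProd]
  | cons h l ih =>
    calc wordProd 𝒜 I (g :: h :: l)
        = 𝒜 g * I * wordProd 𝒜 I (h :: l) := wordProd_cons ..
      _ ≤ 𝒜 g * 𝒜 1 * (𝒜 (h :: l).prod * I) := by gcongr; exact ih h
      _ = 𝒜 g * 𝒜 1 * 𝒜 (h :: l).prod * I := (mul_assoc ..).symm
      _ ≤ 𝒜 (g * 1) * 𝒜 (h :: l).prod * I := by gcongr; exact hmul g 1
      _ ≤ 𝒜 (g * 1 * (h :: l).prod) * I := by gcongr; exact hmul _ _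
      _ = 𝒜 (g :: h :: l).prod * I := by rw [mul_one, ← List.prod_cons]

theorem exists_suffix_wordProd_le_pow_mul_top [IsRightCancelMul G] [DecidableEq G]
    (hmul : ∀ g h, 𝒜 g * 𝒜 h ≤ 𝒜 (g * h)) (hI : I ≤ 𝒜 1) (hideal : 𝒜 1 * I ≤ I) {t : G} {m : ℕ}
    {l : List G} (hm : m < (l.tails.map List.prod).count t) :
    ∃ l' : List G, l' <:+ l ∧ l'.prod = t ∧ wordProd 𝒜 I l' ≤ I ^ m * ⊤ := by
  induction l generalizing m with
  | nil =>
    obtain ⟨rfl, rfl⟩ : 1 = t ∧ m = 0 := by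
      simp only [List.tails, List.map_cons, List.map_nil, List.prod_nil, List.count_singleton,
        beq_iff_eq] at hm
      split_ifs at hm with ht
      · exact ⟨ht, Nat.lt_one_iff.mp hm⟩
      · exact absurd hm (Nat.not_lt_zero m)
    exact ⟨[], List.suffix_rfl, List.prod_nil, by simp⟩
  | cons g l ih =>
    simp only [List.tails_cons, List.map_cons, List.count_cons, beq_iff_eq] at hm
    by_cases hgl : (g :: l).prod = t
    · cases m with
      | zero => exact ⟨g :: l, List.suffix_rfl, hgl, by simp⟩
      | succ m =>
        rw [if_pos hgl, Nat.add_lt_add_iff_right] at hm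
        obtain ⟨_, ⟨l₁, rfl⟩, rfl, hle⟩ := ih hm
        have hprod : (g :: l₁).prod = 1 :=
          mul_eq_right.mp (by rwa [← List.prod_append, List.cons_append])
        refine ⟨_, List.suffix_rfl, hgl, ?_⟩
        rw [← List.cons_append, wordProd_append, pow_succ', mul_assoc]
        gcongr
        exact (wordProd_cons_le hmul hI g l₁).trans (hprod ▸ hideal)
    · rw [if_neg hgl, add_zero] at hm
      obtain ⟨l', hl', hprod, hle⟩ := ih hm
      exact ⟨l', hl'.trans (List.suffix_cons g l), hprod, hle⟩

theorem wordProd_eq_bot_of_card_mul_le_length [IsRightCancelMul G]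
    (hmul : ∀ g h, 𝒜 g * 𝒜 h ≤ 𝒜 (g * h)) (hI : I ≤ 𝒜 1) (hideal : 𝒜 1 * I ≤ I) {m : ℕ}
    (hm : I ^ m = ⊥) {S : Finset G} (h1 : 1 ∈ S) (hS : ∀ g, 𝒜 g ≠ ⊥ → g ∈ S) {l : List G}
    (hl : S.card * m ≤ l.length) : wordProd 𝒜 I l = ⊥ := by
  classical
  by_contra hne
  have prod_mem (l' : List G) (hl' : l' <:+ l) : l'.prod ∈ S := by
    cases l' with
    | nil => exact h1
    | cons g l' =>
      refine hS _ fun hbot ↦ hne (wordProd_eq_bot_of_suffix hl' ?_)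
      simpa only [hbot, Submodule.bot_mul, le_bot_iff] using wordProd_cons_le hmul hI g l'
  obtain ⟨t, ht⟩ := exists_lt_count_of_card_mul_lt_length (l := l.tails.map List.prod)
    (S := S) (m := m) (by simpa using prod_mem) (by simpa using Nat.lt_succ_of_le hl)
  obtain ⟨l', hl', -, hle⟩ := exists_suffix_wordProd_le_pow_mul_top hmul hI hideal ht
  rw [hm, Submodule.bot_mul, le_bot_iff] at hle
  exact hne (wordProd_eq_bot_of_suffix hl' hle)

theorem isNilpotent_top_mul [IsRightCancelMul G] (hmul : ∀ g h, 𝒜 g * 𝒜 h ≤ 𝒜 (g * h))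
    (htop : ⨆ g, 𝒜 g = ⊤) (hsupp : {g | 𝒜 g ≠ ⊥}.Finite) (hI : I ≤ 𝒜 1) (hideal : 𝒜 1 * I ≤ I)
    (hnil : IsNilpotent I) : IsNilpotent (⊤ * I) := by
  classical
  obtain ⟨m, hm⟩ := hnil
  let S := insert 1 hsupp.toFinset
  have hword (l : List G) (hl : l.length = S.card * m) : wordProd 𝒜 I l ≤ ⊥ :=
    (wordProd_eq_bot_of_card_mul_le_length hmul hI hideal hm (S := S) (by simp [S])
      (by simp +contextual [S]) hl.ge).le
  refine ⟨S.card * m, le_bot_iff.mp ?_⟩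
  rw [← htop]
  exact (iSup_mul_pow_le_iSup_wordProd _).trans (iSup₂_le hword)

theorem isNilpotent_top_mul_mul_top [IsRightCancelMul G] (hmul : ∀ g h, 𝒜 g * 𝒜 h ≤ 𝒜 (g * h))
    (htop : ⨆ g, 𝒜 g = ⊤) (hsupp : {g | 𝒜 g ≠ ⊥}.Finite) (hI : I ≤ 𝒜 1) (hideal : 𝒜 1 * I ≤ I)
    (hnil : IsNilpotent I) : IsNilpotent (⊤ * I * ⊤) := by
  apply isNilpotent_mul_swap
  have top_mul_top : (⊤ * ⊤ : Submodule k A) = ⊤ :=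
    top_unique (le_mul_of_one_le_right' le_top)
  rw [← mul_assoc, top_mul_top]
  exact isNilpotent_top_mul hmul htop hsupp hI hideal hnil

end WordProd

theorem coe_twoSidedIdeal_span_eq_top_mul_mul_top {R : Type*} [Ring R] (I : AddSubgroup R) :
    (TwoSidedIdeal.span (I : Set R) : Set R) =
      (⊤ * I.toIntSubmodule * ⊤ : Submodule ℤ R) := by
  have hspan : (⊤ * I.toIntSubmodule * ⊤ : Submodule ℤ R) =
      Submodule.span ℤ (Set.univ * (I : Set R) * Set.univ) := by
    rw [← Submodule.span_mul_span, ← Submodule.span_mul_span, Submodule.span_univ,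
      ← AddSubgroup.coe_toIntSubmodule, Submodule.span_eq]
  ext x
  rw [SetLike.mem_coe, TwoSidedIdeal.mem_span_iff_mem_addSubgroup_closure, hspan,
    ← Submodule.span_int_eq_addSubgroupClosure]
  rfl

theorem iSup_eq_top_of_decomposition {ι M : Type*} [DecidableEq ι] [AddCommGroup M]
    (ℳ : ι → AddSubgroup M) [DirectSum.Decomposition ℳ] : ⨆ i, ℳ i = ⊤ := by
  refine top_unique fun x _ ↦ ?_
  induction x using DirectSum.Decomposition.inductionOn ℳ with
  | zero => exact zero_mem _
  | @homogeneous i x => exact AddSubgroup.mem_iSup_of_mem i x.2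
  | add x y hx hy => exact add_mem (hx trivial) (hy trivial)

theorem stmt_9_general {G : Type*} [Monoid G] [IsRightCancelMul G] {R : Type*} [Ring R]
    (ℬ : G → AddSubgroup R) (hmul : ∀ g h : G, ∀ x ∈ ℬ g, ∀ y ∈ ℬ h, x * y ∈ ℬ (g * h))
    (htop : ⨆ g, ℬ g = ⊤) (hsupp : {g : G | ℬ g ≠ ⊥}.Finite)
    (hsemiprime : ∀ J : TwoSidedIdeal R, (∃ n : ℕ, 0 < n ∧ (J : Set R) ^ n ⊆ {0}) → J = ⊥)
    (I : AddSubgroup R) (hIe : (I : Set R) ⊆ ℬ (1 : G))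
    (hIideal : ∀ a ∈ ℬ (1 : G), ∀ x ∈ I, a * x ∈ I)
    (hInil : ∃ n : ℕ, 0 < n ∧ (I : Set R) ^ n ⊆ {0}) :
    (∃ n : ℕ, 0 < n ∧ ((TwoSidedIdeal.span (I : Set R) : TwoSidedIdeal R) : Set R) ^ n ⊆ {0}) ∧
      I = ⊥ := by
  have hspan : ∃ n : ℕ, 0 < n ∧ (TwoSidedIdeal.span (I : Set R) : Set R) ^ n ⊆ {0} := by
    rw [coe_twoSidedIdeal_span_eq_top_mul_mul_top, ← isNilpotent_iff_exists_coe_pow_subset]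
    exact isNilpotent_top_mul_mul_top (𝒜 := fun g ↦ (ℬ g).toIntSubmodule)
      (fun g h ↦ Submodule.mul_le.mpr (hmul g h))
      (by rw [← OrderIso.map_iSup, htop, OrderIso.map_top])
      (by simpa using hsupp) hIe (Submodule.mul_le.mpr hIideal)
      (isNilpotent_iff_exists_coe_pow_subset.mpr hInil)
  refine ⟨hspan, (AddSubgroup.eq_bot_iff_forall I).mpr fun x hx ↦ ?_⟩
  have hx_span : x ∈ TwoSidedIdeal.span (I : Set R) := TwoSidedIdeal.subset_span hx
  rwa [hsemiprime _ hspan, TwoSidedIdeal.mem_bot] at hx_span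

/-- In a graded ring `R` with finite support and no nonzero nilpotent two-sided ideals,
for any nilpotent ideal `I` of the identity component `R_e`, the two-sided ideal
`RIR` generated by `I` is nilpotent; consequently `I = 0`. -/
theorem stmt_9 {G : Type*} [Group G] [DecidableEq G]
    {R : Type*} [Ring R]
    (ℬ : G → AddSubgroup R) [DirectSum.Decomposition ℬ]
    (hmul : ∀ g h : G, ∀ x ∈ ℬ g, ∀ y ∈ ℬ h, x * y ∈ ℬ (g * h))
    -- finite support:
    (hsupp : {g : G | ℬ g ≠ ⊥}.Finite)
    -- `R` has no nonzero nilpotent two-sided ideals: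
    (hsemiprime : ∀ J : TwoSidedIdeal R, (∃ n : ℕ, 0 < n ∧ (J : Set R) ^ n ⊆ {0}) → J = ⊥)
    -- `I` is a nilpotent ideal of the identity component `R_e`:
    (I : AddSubgroup R) (hIe : (I : Set R) ⊆ ℬ (1 : G))
    (hIideal : ∀ a ∈ ℬ (1 : G), ∀ x ∈ I, a * x ∈ I ∧ x * a ∈ I)
    (hInil : ∃ n : ℕ, 0 < n ∧ (I : Set R) ^ n ⊆ {0}) :
    (∃ n : ℕ, 0 < n ∧ ((TwoSidedIdeal.span (I : Set R) : TwoSidedIdeal R) : Set R) ^ n ⊆ {0}) ∧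
      I = ⊥ :=
  stmt_9_general ℬ hmul (iSup_eq_top_of_decomposition ℬ) hsupp hsemiprime I hIe
    (fun a ha x hx ↦ (hIideal a ha x hx).1) hInil
end

section
/- Let R be a finite-dimensional graded simple algebra over an algebraically closed field F such that the identity component A = R_e is a simple algebra. Then R = AC ≅ A ⊗ C, where A ≅ M_k(F) carries the trivial G-grading, C is the centralizer of A in R, C is a graded subalgebra with dim C_e = 1, and C is a graded division algebra. -/
/-- The identity component `R_e = ℬ 1` of a graded algebra, as a non-unital
subalgebra. -/
def identityComponent {G : Type*} [Group G] {F : Type*} [Field F]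
    {R : Type*} [NonUnitalRing R] [Module F R] [SMulCommClass F R R] [IsScalarTower F R R]
    (ℬ : G → Submodule F R)
    (hmul : ∀ g h : G, ∀ x ∈ ℬ g, ∀ y ∈ ℬ h, x * y ∈ ℬ (g * h)) :
    NonUnitalSubalgebra F R where
  carrier := (ℬ (1 : G) : Set R)
  add_mem' := fun hx hy => (ℬ (1 : G)).add_mem hx hy
  zero_mem' := (ℬ (1 : G)).zero_mem
  smul_mem' := fun c _ hx => (ℬ (1 : G)).smul_mem c hx
  mul_mem' := fun {x y} hx hy => by simpa using hmul 1 1 x hx y hy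

/-!
The algebra `A` acts nontrivially on a minimal left ideal of its unitization that lies in `A`, so by
Burnside's theorem `A` is a matrix algebra `M_k(F)`; in particular it is semiprime and has an
identity `e`. Graded simplicity, applied to the ideal of those `b` for which `R b R` has no
component of degree `1`, gives for each nonzero `x ∈ R_g` some `r x s ≠ 0` in `A`, and semiprimeness
of `A` turns this into `t ∈ R_{g⁻¹}` with `x t x ≠ 0`. Hence `e` is the identity of `R`: for
`x ∈ R_g` and `y = e x - x` every product `y t` with `t ∈ R_{g⁻¹}` vanishes. The matrix units of `A`
are then matrix units of `R`, so `R = M_k(C) = A ⊗ C` for their centralizer `C`. Expanding `t` in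
matrix units turns `x t ≠ 0` into `x c ≠ 0` with `c ∈ C ∩ R_{g⁻¹}`, and `x c ∈ C ∩ A = F e`.
-/

section SimpleAlgebra

theorem lsmul_surjective_of_isSimpleModule (F U V : Type*) [Field F] [IsAlgClosed F] [Ring U]
    [Algebra F U] [AddCommGroup V] [Module F V] [Module U V] [IsScalarTower F U V]
    [FiniteDimensional F V] [IsSimpleModule U V] :
    Function.Surjective (Algebra.lsmul F F V : U →ₐ[F] Module.End F V) := by
  classical
  intro f
  let f' : Module.End (Module.End U V) V :=
    { f with
      map_smul' := fun φ v ↦ by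
        obtain ⟨c, rfl⟩ := (IsSimpleModule.algebraMap_end_bijective_of_isAlgClosed F).2 φ
        simp }
  let b := Module.finBasis F V
  obtain ⟨u, hu⟩ := jacobson_density f' (Finset.univ.image b)
  exact ⟨u, b.ext fun i ↦ (hu (b i) (by simp)).symm⟩

theorem eq_zero_of_forall_mul_eq_zero {A : Type*} [NonUnitalRing A] [IsSimpleRing A]
    (hA : ∃ x y : A, x * y ≠ 0) {b : A} (hb : ∀ a, a * b = 0) : b = 0 := by
  let J : TwoSidedIdeal A := .mk' {b | ∀ a, a * b = 0} mul_zero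
    (fun hx hy a ↦ by rw [mul_add, hx, hy, add_zero]) (fun hx a ↦ by rw [mul_neg, hx, neg_zero])
    (fun hy a ↦ by rw [← mul_assoc, hy]) (fun hx a ↦ by rw [← mul_assoc, hx, zero_mul])
  have mem_J (b : A) : b ∈ J ↔ ∀ a, a * b = 0 := TwoSidedIdeal.mem_mk' ..
  rcases eq_bot_or_eq_top J with hJ | hJ
  · rwa [← TwoSidedIdeal.mem_bot A, ← hJ, mem_J]
  · obtain ⟨x, y, hxy⟩ := hA
    exact absurd ((mem_J y).1 (hJ ▸ trivial) x) hxy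

theorem bijective_comp_inr_of_surjective {F A S : Type*} [CommRing F] [NonUnitalRing A]
    [Module F A] [SMulCommClass F A A] [IsScalarTower F A A] [IsSimpleRing A] [Ring S]
    [Algebra F S] [IsSimpleRing S] {ψ : Unitization F A →ₐ[F] S} (hψ : Function.Surjective ψ)
    {a : A} (ha : ψ a ≠ 0) :
    Function.Bijective (ψ.toNonUnitalAlgHom.comp (Unitization.inrNonUnitalAlgHom F A)) := by
  set φ := ψ.toNonUnitalAlgHom.comp (Unitization.inrNonUnitalAlgHom F A)
  have φ_apply (x : A) : φ x = ψ x := rfl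
  constructor
  · rw [← TwoSidedIdeal.ker_eq_bot]
    refine (eq_bot_or_eq_top _).resolve_right fun h ↦ ha ?_
    exact (TwoSidedIdeal.mem_ker φ).1 (h ▸ trivial)
  · have mul_mem_left {s t : S} (ht : t ∈ Set.range φ) : s * t ∈ Set.range φ := by
      obtain ⟨u, rfl⟩ := hψ s
      obtain ⟨x, rfl⟩ := ht
      refine ⟨u.fst • x + u.snd * x, ?_⟩
      rw [φ_apply, φ_apply, ← map_mul]
      congr 1
      ext <;> simp
    have mul_mem_right {s t : S} (hs : s ∈ Set.range φ) : s * t ∈ Set.range φ := by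
      obtain ⟨x, rfl⟩ := hs
      obtain ⟨u, rfl⟩ := hψ t
      refine ⟨u.fst • x + x * u.snd, ?_⟩
      rw [φ_apply, φ_apply, ← map_mul]
      congr 1
      ext <;> simp
    let J : TwoSidedIdeal S := .mk' (Set.range φ) ⟨0, map_zero φ⟩
      (by rintro _ _ ⟨x, rfl⟩ ⟨y, rfl⟩; exact ⟨x + y, map_add φ x y⟩)
      (by rintro _ ⟨x, rfl⟩; exact ⟨-x, map_neg φ x⟩) mul_mem_left mul_mem_right
    have mem_J (s : S) : s ∈ J ↔ s ∈ Set.range φ := TwoSidedIdeal.mem_mk' ..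
    have J_eq_top : J = ⊤ := (eq_bot_or_eq_top J).resolve_left fun h ↦ ha <| by
      rw [← TwoSidedIdeal.mem_bot S, ← h, mem_J]
      exact ⟨a, rfl⟩
    exact fun s ↦ (mem_J s).1 (J_eq_top ▸ trivial)

instance finite_unitization (F A : Type*) [CommSemiring F] [AddCommMonoid A] [Module F A]
    [Module.Finite F A] : Module.Finite F (Unitization F A) :=
  .equiv (Unitization.linearEquiv F F A).symm

variable (F : Type*) {A : Type*} [Field F] [NonUnitalRing A] [Module F A] [SMulCommClass F A A]
  [IsScalarTower F A A] [FiniteDimensional F A] [IsSimpleRing A]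

theorem exists_isSimpleModule_inr_smul_ne_zero (hA : ∃ x y : A, x * y ≠ 0) :
    ∃ V : Ideal (Unitization F A), IsSimpleModule (Unitization F A) V ∧
      ∃ (a : A) (v : V), (a : Unitization F A) • v ≠ 0 := by
  have : IsArtinianRing (Unitization F A) := .of_finite F _
  let I := RingHom.ker (Unitization.fstHom F A)
  have I_ne_bot : I ≠ ⊥ := fun h ↦ by
    obtain ⟨x, y, hxy⟩ := hA
    have mem_I : ((x * y : A) : Unitization F A) ∈ I := RingHom.mem_ker.2 rfl
    rw [h] at mem_I
    exact hxy (Unitization.inr_injective (R := F) mem_I)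
  obtain ⟨V, hV, hVI⟩ := (eq_bot_or_exists_atom_le I).resolve_left I_ne_bot
  refine ⟨V, isSimpleModule_iff_isAtom.2 hV, ?_⟩
  obtain ⟨v, hv, hv0⟩ := V.exists_mem_ne_zero_of_ne_bot hV.1
  obtain ⟨w, rfl⟩ : ∃ w : A, (w : Unitization F A) = v :=
    ⟨v.snd, Unitization.ext (RingHom.mem_ker.1 (hVI hv)).symm rfl⟩
  by_contra! h
  have hw : w = 0 := eq_zero_of_forall_mul_eq_zero hA fun a ↦
    Unitization.inr_injective (R := F) (by simpa using congrArg Subtype.val (h a ⟨w, hv⟩))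
  exact hv0 (by rw [hw, Unitization.inr_zero])

theorem exists_ringEquiv_matrix_of_isSimpleRing [IsAlgClosed F] (hA : ∃ x y : A, x * y ≠ 0) :
    ∃ k : ℕ, ∃ ε : A ≃+* Matrix (Fin k) (Fin k) F, ∀ (c : F) (x : A), ε (c • x) = c • ε x := by
  obtain ⟨V, _, a, v, hav⟩ := exists_isSimpleModule_inr_smul_ne_zero F hA
  have : FiniteDimensional F V :=
    FiniteDimensional.finiteDimensional_submodule (V.restrictScalars F)
  have : Nontrivial V := IsSimpleModule.nontrivial (Unitization F A) V
  let b := Module.finBasis F V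
  have : Nonempty (Fin (Module.finrank F V)) := b.index_nonempty
  let ρ : Unitization F A →ₐ[F] Module.End F V := Algebra.lsmul F F V
  let ψ := (LinearMap.toMatrixAlgEquiv b).toAlgHom.comp ρ
  have hψ : Function.Surjective ψ := (LinearMap.toMatrixAlgEquiv b).surjective.comp
    (lsmul_surjective_of_isSimpleModule F (Unitization F A) V)
  have hψa : ψ a ≠ 0 := (map_ne_zero_iff _ (LinearMap.toMatrixAlgEquiv b).injective).2
    fun h ↦ hav (LinearMap.congr_fun h v)
  exact ⟨_, .ofBijective _ (bijective_comp_inr_of_surjective hψ hψa),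
    map_smul (ψ.toNonUnitalAlgHom.comp _)⟩

theorem exists_matrix_mul_mul_self_ne_zero {n α : Type*} [Fintype n] [Semiring α]
    [NoZeroDivisors α] {M : Matrix n n α} (hM : M ≠ 0) : ∃ N : Matrix n n α, M * N * M ≠ 0 := by
  classical
  obtain ⟨i, j, hij⟩ : ∃ i j, M i j ≠ 0 := by
    by_contra! h
    exact hM (Matrix.ext h)
  have entry_eq : (M * Matrix.single j i 1 * M : Matrix n n α) i j = M i j * M i j := by
    rw [Matrix.mul_apply, Finset.sum_eq_single i, Matrix.mul_single_apply_same, mul_one]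
    · intro l _ hl
      rw [Matrix.mul_single_apply_of_ne _ _ _ _ _ hl, zero_mul]
    · simp
  exact ⟨Matrix.single j i 1, fun h ↦ mul_self_ne_zero.2 hij <| by
    rw [← entry_eq, h, Matrix.zero_apply]⟩

end SimpleAlgebra

section Decompose

variable {ι R σ : Type*} [DecidableEq ι] [NonUnitalNonAssocSemiring R] [SetLike σ R]
  [AddSubmonoidClass σ R] (ℬ : ι → σ) [DirectSum.Decomposition ℬ]

theorem decompose_mul_of_mem_left [Mul ι] [IsLeftCancelMul ι]
    (hmul : ∀ g h : ι, ∀ x ∈ ℬ g, ∀ y ∈ ℬ h, x * y ∈ ℬ (g * h)) {c : ι} {s : R} (hs : s ∈ ℬ c)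
    (x : R) (g : ι) :
    (DirectSum.decompose ℬ (s * x) (c * g) : R) = s * DirectSum.decompose ℬ x g := by
  induction x using DirectSum.Decomposition.inductionOn ℬ with
  | zero => simp
  | add x y hx hy => simp [mul_add, hx, hy]
  | @homogeneous i x =>
    have hsx := hmul c i s hs x x.2
    obtain rfl | hig := eq_or_ne i g
    · rw [DirectSum.decompose_of_mem_same ℬ hsx, DirectSum.decompose_of_mem_same ℬ x.2]
    · rw [DirectSum.decompose_of_mem_ne ℬ hsx (by simpa using hig),
        DirectSum.decompose_of_mem_ne ℬ x.2 hig, mul_zero]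

theorem decompose_mul_of_mem_right [Mul ι] [IsRightCancelMul ι]
    (hmul : ∀ g h : ι, ∀ x ∈ ℬ g, ∀ y ∈ ℬ h, x * y ∈ ℬ (g * h)) {c : ι} {s : R} (hs : s ∈ ℬ c)
    (x : R) (g : ι) :
    (DirectSum.decompose ℬ (x * s) (g * c) : R) = DirectSum.decompose ℬ x g * s := by
  induction x using DirectSum.Decomposition.inductionOn ℬ with
  | zero => simp
  | add x y hx hy => simp [add_mul, hx, hy]
  | @homogeneous i x =>
    have hxs := hmul i c x x.2 s hs
    obtain rfl | hig := eq_or_ne i g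
    · rw [DirectSum.decompose_of_mem_same ℬ hxs, DirectSum.decompose_of_mem_same ℬ x.2]
    · rw [DirectSum.decompose_of_mem_ne ℬ hxs (by simpa using hig),
        DirectSum.decompose_of_mem_ne ℬ x.2 hig, zero_mul]

end Decompose

theorem decompose_mem_centralizer {ι F R : Type*} [DecidableEq ι] [MulOneClass ι] [IsCancelMul ι]
    [CommSemiring F] [NonUnitalSemiring R] [Module F R] [SMulCommClass F R R] [IsScalarTower F R R]
    (ℬ : ι → Submodule F R) [DirectSum.Decomposition ℬ]
    (hmul : ∀ g h : ι, ∀ x ∈ ℬ g, ∀ y ∈ ℬ h, x * y ∈ ℬ (g * h)) {S : Set R} (hS : S ⊆ ℬ 1) {x : R}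
    (hx : x ∈ NonUnitalSubalgebra.centralizer F S) (g : ι) :
    (DirectSum.decompose ℬ x g : R) ∈ NonUnitalSubalgebra.centralizer F S := by
  rw [NonUnitalSubalgebra.mem_centralizer_iff] at hx ⊢
  intro s hs
  rw [← decompose_mul_of_mem_left ℬ hmul (hS hs), ← decompose_mul_of_mem_right ℬ hmul (hS hs),
    hx s hs, one_mul, mul_one]

section GradedSimple

variable {G R σ : Type*} [Group G] [NonUnitalRing R] [SetLike σ R] (ℬ : G → σ)

/-- A grading is nondegenerate if the pairings `ℬ g × ℬ g⁻¹ → ℬ 1` and `ℬ g⁻¹ × ℬ g → ℬ 1` given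
by multiplication have no kernel in `ℬ g`. -/
structure IsNondegenerateGrading : Prop where
  exists_mul_right_ne_zero : ∀ {g : G} {x : R}, x ∈ ℬ g → x ≠ 0 → ∃ t ∈ ℬ g⁻¹, x * t ≠ 0
  exists_mul_left_ne_zero : ∀ {g : G} {x : R}, x ∈ ℬ g → x ≠ 0 → ∃ t ∈ ℬ g⁻¹, t * x ≠ 0

variable [DecidableEq G] [AddSubgroupClass σ R] [DirectSum.Decomposition ℬ]

/-- The ideal of all `b` such that every product `r * b * s` has zero component of degree `1`.
It is the graded ideal to which graded simplicity is applied. -/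
def degreeOneRadical : TwoSidedIdeal R :=
  .mk' {b | ∀ r s, (DirectSum.decompose ℬ (r * b * s) 1 : R) = 0} (by simp)
    (fun hx hy r s ↦ by simp [mul_add, add_mul, hx r s, hy r s])
    (fun hx r s ↦ by rw [← neg_mul_comm, hx (-r) s])
    (fun {x _} hy r s ↦ by rw [← mul_assoc, hy (r * x) s])
    (fun {_ y} hx r s ↦ by rw [← mul_assoc, mul_assoc _ y, hx r (y * s)])

variable {ℬ}

theorem mem_degreeOneRadical {b : R} :
    b ∈ degreeOneRadical ℬ ↔ ∀ r s, (DirectSum.decompose ℬ (r * b * s) 1 : R) = 0 :=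
  TwoSidedIdeal.mem_mk' ..

variable (hmul : ∀ g h : G, ∀ x ∈ ℬ g, ∀ y ∈ ℬ h, x * y ∈ ℬ (g * h))

include hmul

theorem mem_degreeOneRadical_of_homogeneous {g : G} {b : R} (hb : b ∈ ℬ g)
    (h : ∀ a c, a * g * c = 1 → ∀ r ∈ ℬ a, ∀ s ∈ ℬ c, r * b * s = 0) :
    b ∈ degreeOneRadical ℬ := by
  refine mem_degreeOneRadical.2 fun r s ↦ ?_
  induction r using DirectSum.Decomposition.inductionOn ℬ with
  | zero => simp
  | add r r' hr hr' => simp [add_mul, hr, hr']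
  | @homogeneous a r =>
    induction s using DirectSum.Decomposition.inductionOn ℬ with
    | zero => simp
    | add s s' hs hs' => simp [mul_add, hs, hs']
    | @homogeneous c s =>
      by_cases hac : a * g * c = 1
      · simp [h a c hac r r.2 s s.2]
      · exact DirectSum.decompose_of_mem_ne ℬ
          (hmul _ _ _ (hmul _ _ _ r.2 _ hb) _ s.2) hac

theorem decompose_mem_degreeOneRadical {b : R} (hb : b ∈ degreeOneRadical ℬ) (g : G) :
    (DirectSum.decompose ℬ b g : R) ∈ degreeOneRadical ℬ := by
  refine mem_degreeOneRadical_of_homogeneous hmul (SetLike.coe_mem _) fun a c hac r hr s hs ↦ ?_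
  rw [← decompose_mul_of_mem_left ℬ hmul hr, ← decompose_mul_of_mem_right ℬ hmul hs, hac]
  exact mem_degreeOneRadical.1 hb r s

theorem exists_mul_mul_ne_zero_of_gradedSimple
    (hsimple : ∀ J : TwoSidedIdeal R,
      (∀ x ∈ J, ∀ g : G, (DirectSum.decompose ℬ x g : R) ∈ J) → J = ⊥ ∨ J = ⊤)
    (hone : ∃ r ∈ ℬ 1, ∃ b ∈ ℬ 1, ∃ s ∈ ℬ 1, r * b * s ≠ 0) {g : G} {x : R} (hx : x ∈ ℬ g)
    (hx0 : x ≠ 0) :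
    ∃ a c, a * g * c = 1 ∧ ∃ r ∈ ℬ a, ∃ s ∈ ℬ c, r * x * s ≠ 0 := by
  by_contra! h
  have hxJ := mem_degreeOneRadical_of_homogeneous hmul hx h
  rcases hsimple _ fun b hb g ↦ decompose_mem_degreeOneRadical hmul hb g with hJ | hJ
  · exact hx0 ((TwoSidedIdeal.mem_bot R).1 (hJ ▸ hxJ))
  · obtain ⟨r, hr, b, hb, s, hs, hrbs⟩ := hone
    have hrbs_mem : r * b * s ∈ ℬ 1 := by
      simpa using hmul _ _ _ (hmul _ _ r hr b hb) s hs
    refine hrbs ?_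
    rw [← DirectSum.decompose_of_mem_same ℬ hrbs_mem]
    exact mem_degreeOneRadical.1 (hJ ▸ trivial) r s

theorem isNondegenerateGrading_of_gradedSimple
    (hsimple : ∀ J : TwoSidedIdeal R,
      (∀ x ∈ J, ∀ g : G, (DirectSum.decompose ℬ x g : R) ∈ J) → J = ⊥ ∨ J = ⊤)
    (hone : ∃ a ∈ ℬ 1, a ≠ 0) (hsemiprime : ∀ a ∈ ℬ 1, a ≠ 0 → ∃ b ∈ ℬ 1, a * b * a ≠ 0) :
    IsNondegenerateGrading ℬ := by
  have key {g : G} {x : R} (hx : x ∈ ℬ g) (hx0 : x ≠ 0) : ∃ t ∈ ℬ g⁻¹, x * t * x ≠ 0 := by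
    obtain ⟨z, hz, hz0⟩ := hone
    obtain ⟨w, hw, hzwz⟩ := hsemiprime z hz hz0
    obtain ⟨a, c, hac, r, hr, s, hs, hrxs⟩ := exists_mul_mul_ne_zero_of_gradedSimple hmul hsimple
      ⟨z, hz, w, hw, z, hz, hzwz⟩ hx hx0
    obtain ⟨b, hb, hne⟩ := hsemiprime _ (hac ▸ hmul _ _ _ (hmul _ _ r hr x hx) s hs) hrxs
    have hca : c * 1 * a = g⁻¹ := by
      rw [mul_one, eq_inv_iff_mul_eq_one, mul_assoc, ← mul_eq_one_comm, hac]
    refine ⟨s * b * r, hca ▸ hmul _ _ _ (hmul _ _ s hs b hb) r hr, fun h ↦ hne ?_⟩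
    calc r * x * s * b * (r * x * s) = r * (x * (s * b * r) * x) * s := by simp only [mul_assoc]
      _ = 0 := by rw [h, mul_zero, zero_mul]
  constructor <;> intro g x hx hx0 <;> obtain ⟨t, ht, hne⟩ := key hx hx0
  · exact ⟨t, ht, left_ne_zero_of_mul hne⟩
  · exact ⟨t, ht, right_ne_zero_of_mul (mul_assoc x t x ▸ hne)⟩

theorem IsNondegenerateGrading.mul_eq_self (hℬ : IsNondegenerateGrading ℬ) {e : R} (he : e ∈ ℬ 1)
    (hone : ∀ a ∈ ℬ 1, e * a = a ∧ a * e = a) (x : R) : e * x = x ∧ x * e = x := by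
  induction x using DirectSum.Decomposition.inductionOn ℬ with
  | zero => simp
  | add x y hx hy => simp [mul_add, add_mul, hx, hy]
  | @homogeneous g x =>
    have hex : e * x - x ∈ ℬ g := sub_mem (by simpa using hmul 1 g e he x x.2) x.2
    have hxe : (x : R) * e - x ∈ ℬ g := sub_mem (by simpa using hmul g 1 x x.2 e he) x.2
    constructor <;> refine sub_eq_zero.1 (by_contra fun hne ↦ ?_)
    · obtain ⟨t, ht, hne'⟩ := hℬ.exists_mul_right_ne_zero hex hne
      have hxt : (x : R) * t ∈ ℬ 1 := by simpa using hmul g g⁻¹ x x.2 t ht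
      exact hne' (by rw [sub_mul, mul_assoc, (hone _ hxt).1, sub_self])
    · obtain ⟨t, ht, hne'⟩ := hℬ.exists_mul_left_ne_zero hxe hne
      have htx : t * x ∈ ℬ 1 := by simpa using hmul g⁻¹ g t ht x x.2
      exact hne' (by rw [mul_sub, ← mul_assoc, (hone _ htx).2, sub_self])

end GradedSimple

section MatrixUnits

variable {n F R : Type*} [Fintype n] [DecidableEq n]

/-- A full system of matrix units in a non-unital ring: the sum of the diagonal units is required
to be a two-sided identity of the whole ring. -/
structure IsMatrixUnits [NonUnitalNonAssocSemiring R] (E : n → n → R) : Prop where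
  mul_eq_ite : ∀ i j p q, E i j * E p q = if j = p then E i q else 0
  sum_diag_mul : ∀ r, (∑ i, E i i) * r = r
  mul_sum_diag : ∀ r, r * ∑ i, E i i = r

/-- The coefficient of `r` at the matrix unit `E i j`, when `R` is regarded as the algebra of
matrices over the centralizer of the matrix units `E`. -/
def matrixCoeff (F : Type*) {n R : Type*} [Fintype n] [CommSemiring F] [NonUnitalSemiring R]
    [Module F R] [SMulCommClass F R R] [IsScalarTower F R R] (E : n → n → R) (i j : n) :
    R →ₗ[F] R :=
  ∑ l, LinearMap.mulLeftRight F (E l i, E j l)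

variable [CommSemiring F] [NonUnitalSemiring R] [Module F R] [SMulCommClass F R R]
  [IsScalarTower F R R] {E : n → n → R}

omit [DecidableEq n] in
theorem matrixCoeff_apply (i j : n) (r : R) :
    matrixCoeff F E i j r = ∑ l, E l i * r * E j l := by
  simp [matrixCoeff, LinearMap.sum_apply]

omit [DecidableEq n] in
theorem matrixCoeff_mem {G : Type*} [MulOneClass G] {ℬ : G → Submodule F R}
    (hmul : ∀ g h : G, ∀ x ∈ ℬ g, ∀ y ∈ ℬ h, x * y ∈ ℬ (g * h)) (hE : ∀ i j, E i j ∈ ℬ 1) {g : G}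
    {r : R} (hr : r ∈ ℬ g) (i j : n) : matrixCoeff F E i j r ∈ ℬ g := by
  rw [matrixCoeff_apply]
  exact sum_mem fun l _ ↦ by
    simpa using hmul _ _ _ (hmul _ _ _ (hE l i) r hr) _ (hE j l)

namespace IsMatrixUnits

variable (hE : IsMatrixUnits E)

include hE

theorem mul_matrixCoeff (i j p q : n) (r : R) :
    E p q * matrixCoeff F E i j r = E p i * r * E j q := by
  simp [matrixCoeff_apply, Finset.mul_sum, ← mul_assoc, hE.mul_eq_ite, ite_mul]

theorem matrixCoeff_mul (i j p q : n) (r : R) :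
    matrixCoeff F E i j r * E p q = E p i * r * E j q := by
  simp [matrixCoeff_apply, Finset.sum_mul, mul_assoc, hE.mul_eq_ite, mul_ite]

variable (F) in
theorem sum_mul_matrixCoeff (r : R) :
    ∑ p : n × n, E p.1 p.2 * matrixCoeff F E p.1 p.2 r = r := by
  simp only [hE.mul_matrixCoeff, Fintype.sum_prod_type, ← Finset.mul_sum, ← Finset.sum_mul,
    hE.sum_diag_mul, hE.mul_sum_diag]

theorem matrixCoeff_unit_mul {d : R} (hd : ∀ i j, E i j * d = d * E i j) (i j p q : n) :
    matrixCoeff F E i j (E p q * d) = if (p, q) = (i, j) then d else 0 := by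
  have summand_eq (l : n) : E l i * (E p q * d) * E j l =
      if (p, q) = (i, j) then E l l * d else 0 := by
    rw [mul_assoc, mul_assoc, ← hd, ← mul_assoc, ← mul_assoc, hE.mul_eq_ite, ite_mul, zero_mul,
      hE.mul_eq_ite]
    aesop
  simp only [matrixCoeff_apply, summand_eq]
  split_ifs
  · rw [← Finset.sum_mul, hE.sum_diag_mul]
  · exact Finset.sum_const_zero

theorem sum_diag_ne_zero [Nontrivial R] : ∑ i, E i i ≠ 0 := fun h ↦
  let ⟨x, hx⟩ := exists_ne (0 : R)
  hx (by rw [← hE.sum_diag_mul x, h, zero_mul])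

theorem matrixCoeff_self {x : R} (hx : ∀ i j, E i j * x = x * E i j) (i : n) :
    matrixCoeff F E i i x = x := by
  simp only [matrixCoeff_apply, hx, mul_assoc, hE.mul_eq_ite, if_true, ← Finset.mul_sum,
    hE.mul_sum_diag]

end IsMatrixUnits

end MatrixUnits

section MatrixSubspace

open scoped TensorProduct

variable {n F R : Type*} [Field F] [NonUnitalRing R] [Module F R] [SMulCommClass F R R]
  [IsScalarTower F R R] {V : Submodule F R} {b : Module.Basis (n × n) F V}

theorem basis_mul_comm_of_mem_centralizer {d : R}
    (hd : d ∈ NonUnitalSubalgebra.centralizer F (V : Set R)) (i j : n) :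
    (b (i, j) : R) * d = d * b (i, j) :=
  (NonUnitalSubalgebra.mem_centralizer_iff F).1 hd _ (b (i, j)).2

namespace IsMatrixUnits

variable [Fintype n] [DecidableEq n] (hb : IsMatrixUnits fun i j ↦ (b (i, j) : R))

include hb

theorem matrixCoeff_mem_centralizer (i j : n) (r : R) :
    matrixCoeff F (fun i j ↦ (b (i, j) : R)) i j r ∈
      NonUnitalSubalgebra.centralizer F (V : Set R) := by
  rw [NonUnitalSubalgebra.mem_centralizer_iff]
  set c := matrixCoeff F (fun i j ↦ (b (i, j) : R)) i j r
  have hc : (LinearMap.mulRight F c).comp V.subtype = (LinearMap.mulLeft F c).comp V.subtype :=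
    b.ext fun p ↦ (hb.mul_matrixCoeff i j p.1 p.2 r).trans (hb.matrixCoeff_mul i j p.1 p.2 r).symm
  exact fun a ha ↦ LinearMap.congr_fun hc ⟨a, ha⟩

theorem sum_diag_mem_centralizer :
    ∑ i, (b (i, i) : R) ∈ NonUnitalSubalgebra.centralizer F (V : Set R) :=
  (NonUnitalSubalgebra.mem_centralizer_iff F).2 fun a _ ↦
    (hb.mul_sum_diag a).trans (hb.sum_diag_mul a).symm

theorem matrixCoeff_eq_repr_smul (a : V) (i j : n) :
    matrixCoeff F (fun i j ↦ (b (i, j) : R)) i j a = b.repr a (i, j) • ∑ i, (b (i, i) : R) := by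
  have h : (matrixCoeff F (fun i j ↦ (b (i, j) : R)) i j).comp V.subtype =
      (b.coord (i, j)).smulRight (∑ i, (b (i, i) : R)) := b.ext fun p ↦ by
    have coeff_basis := hb.matrixCoeff_unit_mul (F := F)
      (basis_mul_comm_of_mem_centralizer hb.sum_diag_mem_centralizer) i j p.1 p.2
    rw [hb.mul_sum_diag] at coeff_basis
    simp [coeff_basis, Finsupp.single_apply]
  exact LinearMap.congr_fun h a

theorem inf_centralizer_eq_span :
    V ⊓ (NonUnitalSubalgebra.centralizer F (V : Set R)).toSubmodule =
      Submodule.span F {∑ i, (b (i, i) : R)} := by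
  apply le_antisymm
  · rintro x ⟨hxV, hxC⟩
    obtain _ | ⟨⟨i⟩⟩ := isEmpty_or_nonempty n
    · rw [← hb.sum_diag_mul x, Fintype.sum_empty, zero_mul]
      exact zero_mem _
    · refine Submodule.mem_span_singleton.2 ⟨b.repr ⟨x, hxV⟩ (i, i), ?_⟩
      rw [← hb.matrixCoeff_eq_repr_smul,
        hb.matrixCoeff_self (basis_mul_comm_of_mem_centralizer hxC)]
  · rw [Submodule.span_singleton_le_iff_mem]
    exact ⟨sum_mem fun i _ ↦ (b (i, i)).2, hb.sum_diag_mem_centralizer⟩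

theorem finrank_inf_centralizer [Nontrivial R] :
    Module.finrank F ↥(V ⊓ (NonUnitalSubalgebra.centralizer F (V : Set R)).toSubmodule) = 1 := by
  rw [hb.inf_centralizer_eq_span]
  exact finrank_span_singleton hb.sum_diag_ne_zero

theorem bijective_lift_mul :
    Function.Bijective (TensorProduct.lift ((LinearMap.mul F R).compl₁₂ V.subtype
      (NonUnitalSubalgebra.centralizer F (V : Set R)).toSubmodule.subtype)) := by
  set μ := TensorProduct.lift ((LinearMap.mul F R).compl₁₂ V.subtype
      (NonUnitalSubalgebra.centralizer F (V : Set R)).toSubmodule.subtype)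
  let coeff (p : n × n) := (matrixCoeff F (fun i j ↦ (b (i, j) : R)) p.1 p.2).codRestrict
    (NonUnitalSubalgebra.centralizer F (V : Set R)).toSubmodule
    (hb.matrixCoeff_mem_centralizer p.1 p.2)
  let ν := ∑ p, (TensorProduct.mk F V _ (b p)).comp (coeff p)
  have ν_apply (r : R) : ν r = ∑ p, b p ⊗ₜ coeff p r := by simp [ν, LinearMap.sum_apply]
  have coeff_mul (p q : n × n)
      (d : (NonUnitalSubalgebra.centralizer F (V : Set R)).toSubmodule) :
      coeff p (b q * d) = if q = p then d else 0 :=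
    Subtype.ext <| (hb.matrixCoeff_unit_mul (basis_mul_comm_of_mem_centralizer d.2) ..).trans
      (apply_ite Subtype.val _ d 0).symm
  have leftInverse : ν.comp μ = LinearMap.id :=
    TensorProduct.ext <| b.ext fun q ↦ LinearMap.ext fun d ↦ by
      simp [μ, ν_apply, coeff_mul, TensorProduct.tmul_ite]
  have rightInverse (r : R) : μ (ν r) = r := by
    simpa [μ, ν_apply, coeff] using hb.sum_mul_matrixCoeff F r
  exact Function.bijective_iff_has_inverse.2 ⟨ν, LinearMap.congr_fun leftInverse, rightInverse⟩

end IsMatrixUnits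

omit [SMulCommClass F R R] [IsScalarTower F R R] in
theorem exists_basis_isMatrixUnits [Fintype n] [DecidableEq n]
    {A : NonUnitalSubalgebra F R} (ε : A ≃+* Matrix n n F)
    (hε : ∀ (c : F) (x : A), ε (c • x) = c • ε x)
    (hone : ∀ x : R, ε.symm 1 * x = x ∧ x * ε.symm 1 = x) :
    ∃ b : Module.Basis (n × n) F A, IsMatrixUnits fun i j ↦ (b (i, j) : R) := by
  let ε' : A ≃ₗ[F] Matrix n n F := { ε with map_smul' := hε }
  have basis_apply (i j : n) :
      (Matrix.stdBasis F n n).map ε'.symm (i, j) = ε.symm (Matrix.single i j 1) := by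
    simp [Matrix.stdBasis_eq_single, ε']
  have sum_diag : ∑ i, (ε.symm (Matrix.single i i 1) : R) = ε.symm 1 := by
    rw [← Matrix.sum_single_one, map_sum, AddSubmonoidClass.coe_finsetSum]
  refine ⟨(Matrix.stdBasis F n n).map ε'.symm, ?_⟩
  simp only [basis_apply]
  refine ⟨fun i j p q ↦ ?_, fun r ↦ sum_diag ▸ (hone r).1, fun r ↦ sum_diag ▸ (hone r).2⟩
  rw [← NonUnitalSubalgebra.coe_mul, ← map_mul]
  split_ifs with hjp
  · rw [hjp, Matrix.single_mul_single_same, one_mul]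
  · rw [Matrix.single_mul_single_of_ne _ _ _ _ hjp, map_zero, NonUnitalSubalgebra.coe_zero]

end MatrixSubspace

section GradedDivision

variable {n G F R : Type*} [Fintype n] [DecidableEq n] [Group G] [Field F] [NonUnitalRing R]
  [Module F R] [SMulCommClass F R R] [IsScalarTower F R R] {ℬ : G → Submodule F R}
  {b : Module.Basis (n × n) F (ℬ 1)}

namespace IsNondegenerateGrading

variable (hℬ : IsNondegenerateGrading ℬ)
  (hmul : ∀ g h : G, ∀ x ∈ ℬ g, ∀ y ∈ ℬ h, x * y ∈ ℬ (g * h))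
  (hb : IsMatrixUnits fun i j ↦ (b (i, j) : R))

include hℬ hmul hb

theorem exists_mul_eq_sum_diag {g : G} {x : R}
    (hxC : x ∈ NonUnitalSubalgebra.centralizer F (ℬ 1 : Set R)) (hx : x ∈ ℬ g) (hx0 : x ≠ 0) :
    ∃ y ∈ NonUnitalSubalgebra.centralizer F (ℬ 1 : Set R), y ∈ ℬ g⁻¹ ∧
      x * y = ∑ i, (b (i, i) : R) := by
  obtain ⟨t, ht, hxt⟩ := hℬ.exists_mul_right_ne_zero hx hx0
  let E (i j : n) : R := b (i, j)
  obtain ⟨p, hp⟩ : ∃ p : n × n, x * (E p.1 p.2 * matrixCoeff F E p.1 p.2 t) ≠ 0 := by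
    by_contra! h
    rw [← hb.sum_mul_matrixCoeff F t, Finset.mul_sum] at hxt
    exact hxt (Finset.sum_eq_zero fun p _ ↦ h p)
  set c := matrixCoeff F E p.1 p.2 t
  have hcC : c ∈ NonUnitalSubalgebra.centralizer F (ℬ 1 : Set R) :=
    hb.matrixCoeff_mem_centralizer p.1 p.2 t
  have hc : c ∈ ℬ g⁻¹ := matrixCoeff_mem hmul (fun i j ↦ (b (i, j)).2) ht p.1 p.2
  have hxc0 : x * c ≠ 0 := fun h ↦ hp <| by
    rw [← mul_assoc, ← basis_mul_comm_of_mem_centralizer hxC, mul_assoc, h, mul_zero]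
  have hxc : x * c ∈ Submodule.span F {∑ i, (b (i, i) : R)} := by
    rw [← hb.inf_centralizer_eq_span]
    exact ⟨by simpa using hmul g g⁻¹ x hx c hc,
      (NonUnitalSubalgebra.centralizer F _).mul_mem hxC hcC⟩
  obtain ⟨a, ha⟩ := Submodule.mem_span_singleton.1 hxc
  have ha0 : a ≠ 0 := by
    rintro rfl
    exact hxc0 (by rw [← ha, zero_smul])
  exact ⟨a⁻¹ • c, SMulMemClass.smul_mem _ hcC, (ℬ g⁻¹).smul_mem _ hc, by
    rw [mul_smul_comm, ← ha, inv_smul_smul₀ ha0]⟩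

theorem exists_mul_eq_sum_diag_and_mul_eq_sum_diag {g : G} {x : R}
    (hxC : x ∈ NonUnitalSubalgebra.centralizer F (ℬ 1 : Set R)) (hx : x ∈ ℬ g) (hx0 : x ≠ 0) :
    ∃ y ∈ NonUnitalSubalgebra.centralizer F (ℬ 1 : Set R),
      x * y = ∑ i, (b (i, i) : R) ∧ y * x = ∑ i, (b (i, i) : R) := by
  obtain ⟨y, hyC, hy, hxy⟩ := hℬ.exists_mul_eq_sum_diag hmul hb hxC hx hx0
  have hy0 : y ≠ 0 := by
    rintro rfl
    exact hx0 (by rw [← hb.sum_diag_mul x, ← hxy, mul_zero, zero_mul])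
  obtain ⟨z, -, -, hyz⟩ := hℬ.exists_mul_eq_sum_diag hmul hb hyC hy hy0
  have hxz : x = z := by rw [← hb.mul_sum_diag x, ← hyz, ← mul_assoc, hxy, hb.sum_diag_mul]
  exact ⟨y, hyC, hxy, hxz ▸ hyz⟩

end IsNondegenerateGrading

end GradedDivision

section IdentityComponent

variable {G F R : Type*} [Group G] [Field F] [NonUnitalRing R] [Module F R] [SMulCommClass F R R]
  [IsScalarTower F R R] {ℬ : G → Submodule F R}
  {hmul : ∀ g h : G, ∀ x ∈ ℬ g, ∀ y ∈ ℬ h, x * y ∈ ℬ (g * h)}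

theorem exists_mul_mul_self_ne_zero_of_ringEquiv_matrix {n : Type*} [Fintype n]
    (ε : identityComponent ℬ hmul ≃+* Matrix n n F) {a : R} (ha : a ∈ ℬ 1) (ha0 : a ≠ 0) :
    ∃ b ∈ ℬ 1, a * b * a ≠ 0 := by
  let a' : identityComponent ℬ hmul := ⟨a, ha⟩
  have ha'0 : ε a' ≠ 0 := (map_ne_zero_iff ε ε.injective).2 fun h ↦ ha0 (congrArg Subtype.val h)
  obtain ⟨N, hN⟩ := exists_matrix_mul_mul_self_ne_zero ha'0
  refine ⟨ε.symm N, (ε.symm N).2, fun h ↦ hN ?_⟩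
  have h' : a' * ε.symm N * a' = 0 := Subtype.ext h
  simpa using congrArg ε h'

theorem IsNondegenerateGrading.symm_one_mul_and_mul_symm_one [DecidableEq G]
    [DirectSum.Decomposition ℬ] {S : Type*} [NonAssocSemiring S] (hℬ : IsNondegenerateGrading ℬ)
    (ε : identityComponent ℬ hmul ≃+* S) (x : R) : ε.symm 1 * x = x ∧ x * ε.symm 1 = x := by
  refine hℬ.mul_eq_self hmul (ε.symm 1).2 (fun a ha ↦ ?_) x
  let a' : identityComponent ℬ hmul := ⟨a, ha⟩
  have one_mul_a' : ε.symm 1 * a' = a' := ε.injective (by simp)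
  have a'_mul_one : a' * ε.symm 1 = a' := ε.injective (by simp)
  exact ⟨congrArg Subtype.val one_mul_a', congrArg Subtype.val a'_mul_one⟩

end IdentityComponent

theorem stmt_11_general {G : Type*} [Group G] [DecidableEq G] {F : Type*} [Field F] [IsAlgClosed F]
    {R : Type*} [NonUnitalRing R] [Module F R] [SMulCommClass F R R] [IsScalarTower F R R]
    (ℬ : G → Submodule F R) [DirectSum.Decomposition ℬ]
    (hmul : ∀ g h : G, ∀ x ∈ ℬ g, ∀ y ∈ ℬ h, x * y ∈ ℬ (g * h))
    [FiniteDimensional F (identityComponent ℬ hmul)]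
    (hsimple : ∀ J : TwoSidedIdeal R,
      (∀ x ∈ J, ∀ g : G, ((DirectSum.decompose ℬ x) g : R) ∈ J) → J = ⊥ ∨ J = ⊤)
    (hA2 : ∃ x y : identityComponent ℬ hmul, x * y ≠ 0)
    (hAsimple : ∀ J : TwoSidedIdeal (identityComponent ℬ hmul), J = ⊥ ∨ J = ⊤) :
    (∃ k : ℕ, ∃ e : identityComponent ℬ hmul ≃+* Matrix (Fin k) (Fin k) F,
        ∀ (c : F) (x : identityComponent ℬ hmul), e (c • x) = c • e x) ∧
      (∀ x ∈ NonUnitalSubalgebra.centralizer F ((identityComponent ℬ hmul : Set R)),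
        ∀ g : G, ((DirectSum.decompose ℬ x) g : R) ∈
          NonUnitalSubalgebra.centralizer F ((identityComponent ℬ hmul : Set R))) ∧
      Module.finrank F
        (↥((NonUnitalSubalgebra.centralizer F
          ((identityComponent ℬ hmul : Set R))).toSubmodule ⊓ ℬ (1 : G))) = 1 ∧
      (∃ u ∈ NonUnitalSubalgebra.centralizer F ((identityComponent ℬ hmul : Set R)),
        (∀ x : R, u * x = x ∧ x * u = x) ∧
        ∀ g : G, ∀ x ∈ NonUnitalSubalgebra.centralizer F
            ((identityComponent ℬ hmul : Set R)), x ∈ ℬ g → x ≠ 0 →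
          ∃ y ∈ NonUnitalSubalgebra.centralizer F ((identityComponent ℬ hmul : Set R)),
            x * y = u ∧ y * x = u) ∧
      Function.Bijective
        (TensorProduct.lift ((LinearMap.mul F R).compl₁₂
          (identityComponent ℬ hmul).toSubmodule.subtype
          (NonUnitalSubalgebra.centralizer F
            ((identityComponent ℬ hmul : Set R))).toSubmodule.subtype)) := by
  have : Nontrivial (identityComponent ℬ hmul) :=
    let ⟨x, _, hxy⟩ := hA2
    ⟨x, 0, left_ne_zero_of_mul hxy⟩
  have : IsSimpleRing (identityComponent ℬ hmul) := ⟨⟨hAsimple⟩⟩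
  obtain ⟨k, ε, hε⟩ := exists_ringEquiv_matrix_of_isSimpleRing F hA2
  obtain ⟨a, ha0⟩ := exists_ne (0 : identityComponent ℬ hmul)
  have hℬ : IsNondegenerateGrading ℬ := isNondegenerateGrading_of_gradedSimple hmul hsimple
    ⟨a, a.2, fun h ↦ ha0 (Subtype.ext h)⟩
    fun _ ↦ exists_mul_mul_self_ne_zero_of_ringEquiv_matrix ε
  obtain ⟨b, hb⟩ := exists_basis_isMatrixUnits ε hε (hℬ.symm_one_mul_and_mul_symm_one ε)
  have : Nontrivial R := ⟨a, 0, fun h ↦ ha0 (Subtype.ext h)⟩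
  refine ⟨⟨k, ε, hε⟩, fun x hx g ↦ decompose_mem_centralizer ℬ hmul subset_rfl hx g, ?_,
    ⟨_, hb.sum_diag_mem_centralizer, fun x ↦ ⟨hb.sum_diag_mul x, hb.mul_sum_diag x⟩,
      fun g x hxC hx hx0 ↦ hℬ.exists_mul_eq_sum_diag_and_mul_eq_sum_diag hmul hb hxC hx hx0⟩,
    hb.bijective_lift_mul⟩
  rw [inf_comm]
  exact hb.finrank_inf_centralizer (V := ℬ 1)

/-- If `R` is a finite-dimensional graded simple algebra over an algebraically closed
field whose identity component `A = R_e` is simple, then `A ≅ M_k(F)`, the centralizer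
`C` of `A` in `R` is a graded subalgebra with `dim C_e = 1` which is a graded division
algebra, and multiplication gives an isomorphism `A ⊗ C ≅ R` (so `R = AC`). -/
theorem stmt_11 {G : Type*} [Group G] [DecidableEq G] {F : Type*} [Field F] [IsAlgClosed F]
    {R : Type*} [NonUnitalRing R] [Module F R] [SMulCommClass F R R] [IsScalarTower F R R]
    [FiniteDimensional F R]
    (ℬ : G → Submodule F R) [DirectSum.Decomposition ℬ]
    (hmul : ∀ g h : G, ∀ x ∈ ℬ g, ∀ y ∈ ℬ h, x * y ∈ ℬ (g * h))
    -- `R` is graded simple: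
    (hR2 : ∃ x y : R, x * y ≠ 0)
    (hsimple : ∀ J : TwoSidedIdeal R,
      (∀ x ∈ J, ∀ g : G, ((DirectSum.decompose ℬ x) g : R) ∈ J) → J = ⊥ ∨ J = ⊤)
    -- `A = R_e` is a simple algebra:
    (hA2 : ∃ x y : identityComponent ℬ hmul, x * y ≠ 0)
    (hAsimple : ∀ J : TwoSidedIdeal (identityComponent ℬ hmul), J = ⊥ ∨ J = ⊤) :
    -- `A ≅ M_k(F)` (an `F`-linear ring isomorphism):
    (∃ k : ℕ, ∃ e : identityComponent ℬ hmul ≃+* Matrix (Fin k) (Fin k) F,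
        ∀ (c : F) (x : identityComponent ℬ hmul), e (c • x) = c • e x) ∧
      -- the centralizer `C` of `A` in `R` is a graded subspace:
      (∀ x ∈ NonUnitalSubalgebra.centralizer F ((identityComponent ℬ hmul : Set R)),
        ∀ g : G, ((DirectSum.decompose ℬ x) g : R) ∈
          NonUnitalSubalgebra.centralizer F ((identityComponent ℬ hmul : Set R))) ∧
      -- `dim C_e = 1`:
      Module.finrank F
        (↥((NonUnitalSubalgebra.centralizer F
          ((identityComponent ℬ hmul : Set R))).toSubmodule ⊓ ℬ (1 : G))) = 1 ∧
      -- `C` is a graded division algebra: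
      (∃ u ∈ NonUnitalSubalgebra.centralizer F ((identityComponent ℬ hmul : Set R)),
        (∀ x : R, u * x = x ∧ x * u = x) ∧
        ∀ g : G, ∀ x ∈ NonUnitalSubalgebra.centralizer F
            ((identityComponent ℬ hmul : Set R)), x ∈ ℬ g → x ≠ 0 →
          ∃ y ∈ NonUnitalSubalgebra.centralizer F ((identityComponent ℬ hmul : Set R)),
            x * y = u ∧ y * x = u) ∧
      -- multiplication `A ⊗ C → R` is bijective, i.e. `R = AC ≅ A ⊗ C`:
      Function.Bijective
        (TensorProduct.lift ((LinearMap.mul F R).compl₁₂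
          (identityComponent ℬ hmul).toSubmodule.subtype
          (NonUnitalSubalgebra.centralizer F
            ((identityComponent ℬ hmul : Set R))).toSubmodule.subtype)) := by
  have : FiniteDimensional F (identityComponent ℬ hmul) :=
    FiniteDimensional.finiteDimensional_submodule (identityComponent ℬ hmul).toSubmodule
  exact stmt_11_general ℬ hmul hsimple hA2 hAsimple
end

section
/- Let R be a finite-dimensional graded simple algebra over an algebraically closed field F such that char F = 0 or char F is coprime to the order of every finite subgroup of G. Then R is semiprimitive, i.e., its Jacobson radical is zero. -/
/-!
A minimal nonzero graded left ideal `V` of `R` has a homogeneous right identity `e` of degree one,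
because graded simplicity forces `w * v ≠ 0` for some `w v ∈ V` with `v` homogeneous, and right
multiplication by `v` is then bijective on `V`. The corner ring `e * R * e` is a graded division
ring, hence a crossed product over a division ring of the group `H` of degrees occurring in it.
As `R` is finite-dimensional, `H` is finite; its order is invertible in `F`, so Maschke's averaging
argument makes `e * R * e` semisimple. Hence `e * I * e = 0` for every quasi-regular ideal `I`, and
graded simplicity yields `I = 0`.
-/

open DirectSum

section CrossedProduct

variable {D : Type*} [Ring D] {K : Subring D} {H : Type*} [Group H] {u : H → Dˣ}
  {M N : Type*} [AddCommGroup M] [Module D M] [AddCommGroup N] [Module D N]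

/-- The ring `D` is a crossed product of the group `H` over its subring `K`, with the units `u h`
as group elements: `D = ∑ h, K * u h` and `u g * K * u h ⊆ K * u (g * h)`. The sum is not required
to be direct. -/
structure IsCrossedProduct (K : Subring D) (u : H → Dˣ) : Prop where
  mul_mem : ∀ g h, ∀ c ∈ K, ↑(u g) * c * ↑(u h) * ↑(u (g * h))⁻¹ ∈ K
  span_eq_top : Submodule.span K (Set.range fun h ↦ (u h : D)) = ⊤

namespace IsCrossedProduct

theorem sum_inv_smul_map_smul [Fintype H] (hu : IsCrossedProduct K u) (f : M →ₗ[K] N)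
    (c : K) (k : H) (m : M) :
    ∑ h, (u h)⁻¹ • f (u h • (c • (u k : D)) • m) =
      (c • (u k : D)) • ∑ h, (u h)⁻¹ • f (u h • m) := by
  rw [Finset.smul_sum]
  refine Fintype.sum_equiv (Equiv.mulRight k) _ _ fun h ↦ ?_
  let b : K := ⟨_, hu.mul_mem h k c c.2⟩
  have map_eq : f (u h • (c • (u k : D)) • m) = b • f (u (h * k) • m) := by
    rw [← map_smul]
    simp [b, Units.smul_def, Subring.smul_def, smul_smul, mul_assoc]
  rw [map_eq]
  simp [b, Units.smul_def, Subring.smul_def, smul_smul, mul_assoc]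

/-- The `D`-linear map `m ↦ ∑ h, (u h)⁻¹ • f (u h • m)` obtained from a `K`-linear map `f` by
summing its conjugates: the average of Maschke's theorem, up to the factor `|H|`. -/
def sumConjugates [Fintype H] (hu : IsCrossedProduct K u) (f : M →ₗ[K] N) : M →ₗ[D] N where
  toFun m := ∑ h, (u h)⁻¹ • f (u h • m)
  map_add' m n := by simp only [smul_add, map_add, Finset.sum_add_distrib]
  map_smul' x m := by
    obtain ⟨c, rfl⟩ := (Submodule.mem_span_range_iff_exists_fun K).1
      (hu.span_eq_top.ge (Submodule.mem_top (x := x)))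
    simp only [RingHom.id_apply, Finset.sum_smul, ← hu.sum_inv_smul_map_smul]
    simp only [Finset.smul_sum, map_sum]
    exact Finset.sum_comm

theorem isSemisimpleModule [Finite H] [IsSemisimpleModule K M] (hu : IsCrossedProduct K u)
    (hcard : IsUnit (Nat.card H : D)) : IsSemisimpleModule D M := by
  have := Fintype.ofFinite H
  refine { exists_isCompl := fun N ↦ ?_ }
  obtain ⟨π, hπ⟩ := IsSemisimpleModule.extension_property
    (N.subtype.restrictScalars K) N.subtype_injective .id
  have hπN (n : N) : hu.sumConjugates π n = (Nat.card H : D) • n := by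
    have (h : H) : π (u h • (n : M)) = u h • n := congr($hπ (u h • n))
    simp [sumConjugates, this, Nat.cast_smul_eq_nsmul]
  refine ⟨LinearMap.ker (hu.sumConjugates π), ?_, ?_⟩
  · rw [Submodule.disjoint_def]
    intro n hn hker
    lift n to N using hn
    rw [LinearMap.mem_ker, hπN, hcard.smul_eq_zero] at hker
    rw [hker, Submodule.coe_zero]
  · refine codisjoint_iff.2 (eq_top_iff.2 fun m _ ↦ ?_)
    obtain ⟨v, hv⟩ := hcard
    rw [Submodule.mem_sup]
    refine ⟨_, (v⁻¹ • hu.sumConjugates π m).2, _, ?_, add_sub_cancel _ m⟩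
    rw [LinearMap.mem_ker, map_sub, hπN, ← hv, ← Units.smul_def, smul_inv_smul, sub_self]

end IsCrossedProduct

end CrossedProduct

section GradedDivisionRing

variable {G D : Type*} [Group G] [Ring D] {𝒟 : G → AddSubgroup D}

/-- The components `𝒟 g` make `D` a graded division ring: they span `D`, are multiplied according
to the group law, and their nonzero elements have homogeneous left inverses. The sum of the
components is not required to be direct. -/
structure IsGradedDivisionRing (𝒟 : G → AddSubgroup D) : Prop where
  one_mem : 1 ∈ 𝒟 1
  mul_mem : ∀ {g h x y}, x ∈ 𝒟 g → y ∈ 𝒟 h → x * y ∈ 𝒟 (g * h)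
  iSup_eq_top : ⨆ g, 𝒟 g = ⊤
  exists_left_inv : ∀ {g x}, x ∈ 𝒟 g → x ≠ 0 → ∃ y ∈ 𝒟 g⁻¹, y * x = 1

namespace IsGradedDivisionRing

theorem exists_unit (hD : IsGradedDivisionRing 𝒟) {g : G} {x : D} (hx : x ∈ 𝒟 g) (hx0 : x ≠ 0) :
    ∃ u : Dˣ, u = x ∧ ↑u⁻¹ ∈ 𝒟 g⁻¹ := by
  obtain ⟨y, hy, hyx⟩ := hD.exists_left_inv hx hx0
  have hy0 : y ≠ 0 := left_ne_zero_of_mul fun h ↦ hx0 <| by rw [← mul_one x, ← hyx, h, mul_zero]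
  obtain ⟨z, -, hzy⟩ := hD.exists_left_inv hy hy0
  have hzx : z = x := left_inv_eq_right_inv hzy hyx
  exact ⟨⟨x, y, hzx ▸ hzy, hyx⟩, rfl, hy⟩

/-- The subgroup of degrees of the homogeneous units. For nontrivial `D` these are the degrees of
the nonzero homogeneous elements. -/
def support (hD : IsGradedDivisionRing 𝒟) : Subgroup G where
  carrier := {g | ∃ u : Dˣ, ↑u ∈ 𝒟 g ∧ ↑u⁻¹ ∈ 𝒟 g⁻¹}
  one_mem' := ⟨1, hD.one_mem, by simpa using hD.one_mem⟩
  mul_mem' := by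
    rintro g h ⟨u, hu, hu'⟩ ⟨v, hv, hv'⟩
    refine ⟨u * v, hD.mul_mem hu hv, ?_⟩
    simpa only [mul_inv_rev, Units.val_mul] using hD.mul_mem hv' hu'
  inv_mem' := by
    rintro g ⟨u, hu, hu'⟩
    exact ⟨u⁻¹, hu', by simpa only [inv_inv] using hu⟩

theorem mem_support (hD : IsGradedDivisionRing 𝒟) {g : G} {x : D} (hx : x ∈ 𝒟 g) (hx0 : x ≠ 0) :
    g ∈ hD.support := by
  obtain ⟨u, rfl, hu⟩ := hD.exists_unit hx hx0
  exact ⟨u, hx, hu⟩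

/-- The homogeneous component of degree one, as a subring. -/
def identityComponent (hD : IsGradedDivisionRing 𝒟) : Subring D where
  __ := 𝒟 1
  one_mem' := hD.one_mem
  mul_mem' hx hy := mul_one (1 : G) ▸ hD.mul_mem hx hy

theorem isSemisimpleRing_identityComponent (hD : IsGradedDivisionRing 𝒟) [Nontrivial D] :
    IsSemisimpleRing hD.identityComponent := by
  have isUnit_or_eq_zero (x : hD.identityComponent) : IsUnit x ∨ x = 0 := by
    refine or_iff_not_imp_right.2 fun hx ↦ ?_
    obtain ⟨u, hux, hu⟩ := hD.exists_unit x.2 fun h ↦ hx (Subtype.ext h)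
    rw [inv_one] at hu
    exact ⟨⟨x, ⟨_, hu⟩, Subtype.ext (by simp [← hux]), Subtype.ext (by simp [← hux])⟩, rfl⟩
  let := DivisionRing.ofIsUnitOrEqZero isUnit_or_eq_zero
  infer_instance

theorem exists_isCrossedProduct (hD : IsGradedDivisionRing 𝒟) :
    ∃ u : hD.support → Dˣ, IsCrossedProduct hD.identityComponent u := by
  choose u hu hu' using fun h : hD.support ↦ h.2
  refine ⟨u, fun g h c hc ↦ ?_, ?_⟩
  · change _ ∈ 𝒟 1
    simpa using hD.mul_mem (hD.mul_mem (hD.mul_mem (hu g) hc) (hu h)) (hu' (g * h))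
  · rw [eq_top_iff, ← Submodule.toAddSubgroup_le, Submodule.top_toAddSubgroup, ← hD.iSup_eq_top,
      iSup_le_iff]
    intro g x hx
    obtain rfl | hx0 := eq_or_ne x 0
    · exact zero_mem _
    let h : hD.support := ⟨g, hD.mem_support hx hx0⟩
    have coeff_mem : x * ↑(u h)⁻¹ ∈ 𝒟 1 := by simpa [h] using hD.mul_mem hx (hu' h)
    have hxu : (⟨_, coeff_mem⟩ : hD.identityComponent) • (u h : D) = x :=
      Units.inv_mul_cancel_right x (u h)
    exact hxu ▸ Submodule.smul_mem _ _ (Submodule.subset_span ⟨h, rfl⟩)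

theorem isSemisimpleRing [Nontrivial D] (hD : IsGradedDivisionRing 𝒟) [Finite hD.support]
    (hcard : IsUnit (Nat.card hD.support : D)) : IsSemisimpleRing D := by
  obtain ⟨u, hu⟩ := hD.exists_isCrossedProduct
  have := hD.isSemisimpleRing_identityComponent
  exact hu.isSemisimpleModule hcard

end IsGradedDivisionRing

end GradedDivisionRing

section Grading

variable {G R σ : Type*} [Mul G] [DecidableEq G] [NonUnitalNonAssocSemiring R] [SetLike σ R]
  [AddSubmonoidClass σ R] (ℬ : G → σ) [Decomposition ℬ]

theorem coe_decompose_mul_mul_of_right_mem [IsRightCancelMul G]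
    (hmul : ∀ g h, ∀ x ∈ ℬ g, ∀ y ∈ ℬ h, x * y ∈ ℬ (g * h))
    {h : G} {y : R} (hy : y ∈ ℬ h) (x : R) (g : G) :
    (decompose ℬ (x * y) (g * h) : R) = decompose ℬ x g * y := by
  induction x using Decomposition.inductionOn ℬ with
  | zero => simp
  | @homogeneous k x =>
    obtain rfl | hk := eq_or_ne k g
    · rw [decompose_of_mem_same ℬ (hmul _ _ _ x.2 _ hy), decompose_of_mem_same ℬ x.2]
    · rw [decompose_of_mem_ne ℬ (hmul _ _ _ x.2 _ hy) (by simpa using hk),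
        decompose_of_mem_ne ℬ x.2 hk, zero_mul]
  | add x x' hx hx' => simp [add_mul, decompose_add, hx, hx']

theorem coe_decompose_mul_mul_of_left_mem [IsLeftCancelMul G]
    (hmul : ∀ g h, ∀ x ∈ ℬ g, ∀ y ∈ ℬ h, x * y ∈ ℬ (g * h))
    {h : G} {x : R} (hx : x ∈ ℬ h) (y : R) (g : G) :
    (decompose ℬ (x * y) (h * g) : R) = x * decompose ℬ y g := by
  induction y using Decomposition.inductionOn ℬ with
  | zero => simp
  | @homogeneous k y =>
    obtain rfl | hk := eq_or_ne k g
    · rw [decompose_of_mem_same ℬ (hmul _ _ _ hx _ y.2), decompose_of_mem_same ℬ y.2]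
    · rw [decompose_of_mem_ne ℬ (hmul _ _ _ hx _ y.2) (by simpa using hk),
        decompose_of_mem_ne ℬ y.2 hk, mul_zero]
  | add y y' hy hy' => simp [mul_add, decompose_add, hy, hy']

end Grading

section GradedSimple

variable {G R σ : Type*} [Group G] [DecidableEq G] [NonUnitalRing R] [SetLike σ R]
  [AddSubmonoidClass σ R] {ℬ : G → σ} [Decomposition ℬ]

/-- The ring `R = ⨁ g, ℬ g` is graded simple: its multiplication is nonzero, and the only two-sided
ideals containing the homogeneous components of their elements are `⊥` and `⊤`. Multiplicativity of
the grading is a field because `R` need not have a unit, which `GradedRing` would require. -/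
structure IsGradedSimple_s12 (ℬ : G → σ) [Decomposition ℬ] : Prop where
  mul_mem : ∀ g h, ∀ x ∈ ℬ g, ∀ y ∈ ℬ h, x * y ∈ ℬ (g * h)
  exists_mul_ne_zero : ∃ x y : R, x * y ≠ 0
  eq_bot_or_eq_top : ∀ J : TwoSidedIdeal R,
    (∀ x ∈ J, ∀ g, (decompose ℬ x g : R) ∈ J) → J = ⊥ ∨ J = ⊤

namespace IsGradedSimple_s12

theorem eq_zero_of_forall_mul_eq_zero_s12 (hR : IsGradedSimple_s12 ℬ) {x : R} (hx : ∀ r, r * x = 0) :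
    x = 0 := by
  let J : TwoSidedIdeal R := .mk' {x | ∀ r, r * x = 0} mul_zero
    (fun hx hy r ↦ by rw [mul_add, hx, hy, add_zero]) (fun hx r ↦ by rw [mul_neg, hx, neg_zero])
    (fun hy r ↦ by rw [← mul_assoc, hy]) (fun hx r ↦ by rw [← mul_assoc, hx, zero_mul])
  have mem_J {x : R} : x ∈ J ↔ ∀ r, r * x = 0 := TwoSidedIdeal.mem_mk' ..
  have hJ : J = ⊥ ∨ J = ⊤ := by
    refine hR.eq_bot_or_eq_top J fun x hx g ↦ mem_J.2 fun r ↦ ?_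
    induction r using Decomposition.inductionOn ℬ with
    | zero => exact zero_mul _
    | @homogeneous h r =>
      rw [← coe_decompose_mul_mul_of_left_mem ℬ hR.mul_mem r.2, mem_J.1 hx, decompose_zero]
      rfl
    | add r r' hr hr' => rw [add_mul, hr, hr', add_zero]
  obtain hJ | hJ := hJ
  · exact (TwoSidedIdeal.mem_bot R).1 (hJ ▸ mem_J.2 hx)
  · obtain ⟨a, b, hab⟩ := hR.exists_mul_ne_zero
    exact absurd (mem_J.1 (hJ ▸ TwoSidedIdeal.mem_top R) a) hab

theorem eq_zero_or_eq_zero_of_forall_mul_mul_eq_zero (hR : IsGradedSimple_s12 ℬ) {a b : R} {h : G}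
    (hb : b ∈ ℬ h) (hab : ∀ r, a * r * b = 0) : a = 0 ∨ b = 0 := by
  let J : TwoSidedIdeal R := .mk' {x | ∀ r, x * r * b = 0} (fun r ↦ by rw [zero_mul, zero_mul])
    (fun hx hy r ↦ by rw [add_mul, add_mul, hx, hy, add_zero])
    (fun hx r ↦ by rw [neg_mul, neg_mul, hx, neg_zero])
    (fun hy r ↦ by rw [mul_assoc, mul_assoc, ← mul_assoc _ r, hy, mul_zero])
    (fun hx r ↦ by rw [mul_assoc _ _ r, hx])
  have mem_J {x : R} : x ∈ J ↔ ∀ r, x * r * b = 0 := TwoSidedIdeal.mem_mk' ..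
  have hJ : J = ⊥ ∨ J = ⊤ := by
    refine hR.eq_bot_or_eq_top J fun x hx g ↦ mem_J.2 fun r ↦ ?_
    induction r using Decomposition.inductionOn ℬ with
    | zero => rw [mul_zero, zero_mul]
    | @homogeneous k r =>
      rw [mul_assoc, ← coe_decompose_mul_mul_of_right_mem ℬ hR.mul_mem (hR.mul_mem _ _ _ r.2 _ hb),
        ← mul_assoc x, mem_J.1 hx, decompose_zero]
      rfl
    | add r r' hr hr' => rw [mul_add, add_mul, hr, hr', add_zero]
  obtain hJ | hJ := hJ
  · exact .inl ((TwoSidedIdeal.mem_bot R).1 (hJ ▸ mem_J.2 hab))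
  · refine .inr <| hR.eq_zero_of_forall_mul_eq_zero_s12 fun r ↦ ?_
    refine hR.eq_zero_of_forall_mul_eq_zero_s12 fun s ↦ ?_
    rw [← mul_assoc]
    exact mem_J.1 (hJ ▸ TwoSidedIdeal.mem_top R) r

theorem eq_bot_of_forall_mul_mul_eq_zero (hR : IsGradedSimple_s12 ℬ) {e : R} (he : e ∈ ℬ 1)
    (he0 : e ≠ 0) {I : TwoSidedIdeal R} (hI : ∀ x ∈ I, e * x * e = 0) : I = ⊥ := by
  have mul_mul_eq_zero (r x : R) (hx : x ∈ I) : e * r * x = 0 := by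
    refine (hR.eq_zero_or_eq_zero_of_forall_mul_mul_eq_zero he fun s ↦ ?_).resolve_right he0
    simpa only [mul_assoc] using hI _ (I.mul_mem_left r _ (I.mul_mem_right x s hx))
  have decompose_eq_zero (x : R) (hx : x ∈ I) (g : G) : (decompose ℬ x g : R) = 0 := by
    refine (hR.eq_zero_or_eq_zero_of_forall_mul_mul_eq_zero (SetLike.coe_mem _)
      fun r ↦ ?_).resolve_left he0
    induction r using Decomposition.inductionOn ℬ with
    | zero => rw [mul_zero, zero_mul]
    | @homogeneous k r =>
      rw [← coe_decompose_mul_mul_of_left_mem ℬ hR.mul_mem (hR.mul_mem _ _ _ he _ r.2),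
        mul_mul_eq_zero r x hx, decompose_zero]
      rfl
    | add r r' hr hr' => rw [mul_add, add_mul, hr, hr', add_zero]
  refine eq_bot_iff.2 fun x hx ↦ (TwoSidedIdeal.mem_bot R).2 ?_
  classical
  rw [← sum_support_decompose ℬ x]
  exact Finset.sum_eq_zero fun g _ ↦ decompose_eq_zero x hx g

end IsGradedSimple_s12

end GradedSimple

section GradedLeftIdeal

variable {G F R : Type*} [DecidableEq G] [CommRing F] [NonUnitalRing R] [Module F R]
  {ℬ : G → Submodule F R} [Decomposition ℬ]

/-- The submodule `V` is a graded left ideal of `R = ⨁ g, ℬ g`. -/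
structure IsGradedLeftIdeal (ℬ : G → Submodule F R) [Decomposition ℬ] (V : Submodule F R) :
    Prop where
  mul_mem : ∀ r, ∀ v ∈ V, r * v ∈ V
  isHomogeneous : SetLike.IsHomogeneous ℬ V

theorem isGradedLeftIdeal_top : IsGradedLeftIdeal ℬ ⊤ :=
  ⟨fun _ _ _ ↦ Submodule.mem_top, fun _ _ _ ↦ Submodule.mem_top⟩

/-- The submodule `V` is minimal among the nonzero graded left ideals of `R = ⨁ g, ℬ g`. -/
def IsMinimalGradedLeftIdeal (ℬ : G → Submodule F R) [Decomposition ℬ] (V : Submodule F R) : Prop :=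
  Minimal (fun W ↦ IsGradedLeftIdeal ℬ W ∧ W ≠ ⊥) V

theorem exists_isMinimalGradedLeftIdeal [Nontrivial R] [IsArtinian F R] :
    ∃ V, IsMinimalGradedLeftIdeal ℬ V :=
  exists_minimal_of_wellFoundedLT _ ⟨⊤, isGradedLeftIdeal_top, top_ne_bot⟩

theorem IsMinimalGradedLeftIdeal.isGradedLeftIdeal {V : Submodule F R}
    (hV : IsMinimalGradedLeftIdeal ℬ V) : IsGradedLeftIdeal ℬ V :=
  hV.prop.1

variable [Group G]

theorem IsMinimalGradedLeftIdeal.exists_mul_ne_zero {V : Submodule F R}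
    (hV : IsMinimalGradedLeftIdeal ℬ V) (hR : IsGradedSimple_s12 ℬ) :
    ∃ w ∈ V, ∃ g, ∃ v ∈ ℬ g, v ∈ V ∧ w * v ≠ 0 := by
  classical
  obtain ⟨x, hxV, hx0⟩ := (Submodule.ne_bot_iff V).1 hV.prop.2
  obtain ⟨h, hh⟩ : ∃ h, (decompose ℬ x h : R) ≠ 0 := by
    contrapose! hx0
    rw [← sum_support_decompose ℬ x, Finset.sum_eq_zero fun g _ ↦ hx0 g]
  have hwV := hV.isGradedLeftIdeal.isHomogeneous h hxV
  set w : R := ↑(decompose ℬ x h)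
  obtain ⟨r, hr⟩ : ∃ r, w * r * w ≠ 0 := by
    contrapose! hh
    exact or_self_iff.1 <|
      hR.eq_zero_or_eq_zero_of_forall_mul_mul_eq_zero (SetLike.coe_mem (decompose ℬ x h)) hh
  obtain ⟨g, hg⟩ : ∃ g, w * (decompose ℬ (r * w) g : R) ≠ 0 := by
    contrapose! hr
    rw [mul_assoc, ← sum_support_decompose ℬ (r * w), Finset.mul_sum,
      Finset.sum_eq_zero fun g _ ↦ hr g]
  have hrwV := hV.isGradedLeftIdeal.mul_mem r w hwV
  exact ⟨w, hwV, g, _, SetLike.coe_mem _, hV.isGradedLeftIdeal.isHomogeneous g hrwV, hg⟩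

variable [IsScalarTower F R R]

namespace IsGradedLeftIdeal

variable {V : Submodule F R} (hV : IsGradedLeftIdeal ℬ V)
  (hmul : ∀ g h, ∀ x ∈ ℬ g, ∀ y ∈ ℬ h, x * y ∈ ℬ (g * h)) {h : G} {y : R} (hy : y ∈ ℬ h)

include hV hmul hy

theorem map_mulRight : IsGradedLeftIdeal ℬ (V.map (LinearMap.mulRight F y)) where
  mul_mem := by
    rintro r _ ⟨v, hv, rfl⟩
    exact ⟨r * v, hV.mul_mem r v hv, mul_assoc r v y⟩
  isHomogeneous := by
    rintro g _ ⟨v, hv, rfl⟩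
    refine ⟨_, hV.isHomogeneous (g * h⁻¹) hv, ?_⟩
    rw [LinearMap.mulRight_apply, LinearMap.mulRight_apply,
      ← coe_decompose_mul_mul_of_right_mem ℬ hmul hy, inv_mul_cancel_right]

theorem inf_ker_mulRight : IsGradedLeftIdeal ℬ (V ⊓ LinearMap.ker (LinearMap.mulRight F y)) where
  mul_mem r v := by
    rintro ⟨hv, hvy : v * y = 0⟩
    exact ⟨hV.mul_mem r v hv, show r * v * y = 0 by rw [mul_assoc, hvy, mul_zero]⟩
  isHomogeneous g v := by
    rintro ⟨hv, hvy : v * y = 0⟩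
    refine ⟨hV.isHomogeneous g hv, show (decompose ℬ v g : R) * y = 0 from ?_⟩
    rw [← coe_decompose_mul_mul_of_right_mem ℬ hmul hy, hvy, decompose_zero]
    rfl

end IsGradedLeftIdeal

namespace IsMinimalGradedLeftIdeal

variable {V : Submodule F R} (hV : IsMinimalGradedLeftIdeal ℬ V)

include hV

theorem le_map_mulRight (hmul : ∀ g h, ∀ x ∈ ℬ g, ∀ y ∈ ℬ h, x * y ∈ ℬ (g * h))
    {U : Submodule F R} (hU : IsGradedLeftIdeal ℬ U) {g : G} {u d : R} (hd : d ∈ ℬ g) (hdV : d ∈ V)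
    (hu : u ∈ U) (hud : u * d ≠ 0) : V ≤ U.map (LinearMap.mulRight F d) := by
  refine hV.2 ⟨hU.map_mulRight hmul hd, (Submodule.ne_bot_iff _).2 ⟨_, ⟨u, hu, rfl⟩, hud⟩⟩ ?_
  rintro _ ⟨x, -, rfl⟩
  exact hV.isGradedLeftIdeal.mul_mem x d hdV

theorem eq_zero_of_mul_eq_zero (hmul : ∀ g h, ∀ x ∈ ℬ g, ∀ y ∈ ℬ h, x * y ∈ ℬ (g * h))
    {g : G} {v w z : R} (hv : v ∈ ℬ g) (hw : w ∈ V) (hwv : w * v ≠ 0) (hz : z ∈ V)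
    (hzv : z * v = 0) : z = 0 := by
  by_contra hz0
  have le_ker := hV.2 ⟨hV.isGradedLeftIdeal.inf_ker_mulRight hmul hv,
    (Submodule.ne_bot_iff _).2 ⟨z, ⟨hz, hzv⟩, hz0⟩⟩ inf_le_left
  exact hwv (le_ker hw).2

theorem exists_right_identity (hR : IsGradedSimple_s12 ℬ) :
    ∃ e ∈ ℬ 1, e ∈ V ∧ e ≠ 0 ∧ ∀ z ∈ V, z * e = z := by
  obtain ⟨w, hw, g, v, hv, hvV, hwv⟩ := hV.exists_mul_ne_zero hR
  obtain ⟨x, hx, hxv⟩ :=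
    hV.le_map_mulRight hR.mul_mem hV.isGradedLeftIdeal hv hvV hw hwv hvV
  rw [LinearMap.mulRight_apply] at hxv
  have heV := hV.isGradedLeftIdeal.isHomogeneous 1 hx
  have hev : (decompose ℬ x 1 : R) * v = v := by
    rw [← coe_decompose_mul_mul_of_right_mem ℬ hR.mul_mem hv, hxv, one_mul,
      decompose_of_mem_same ℬ hv]
  refine ⟨_, SetLike.coe_mem _, heV, fun he0 ↦ hwv ?_, fun z hz ↦ sub_eq_zero.1 ?_⟩
  · rw [← hev, he0, zero_mul, mul_zero]
  · have hsub : z * decompose ℬ x 1 - z ∈ V :=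
      V.sub_mem (hV.isGradedLeftIdeal.mul_mem z _ heV) hz
    refine hV.eq_zero_of_mul_eq_zero hR.mul_mem hv hw hwv hsub ?_
    rw [sub_mul, mul_assoc, hev, sub_self]

theorem exists_left_inv (hmul : ∀ g h, ∀ x ∈ ℬ g, ∀ y ∈ ℬ h, x * y ∈ ℬ (g * h))
    {e d : R} {g : G} (he : e ∈ ℬ 1) (heV : e ∈ V) (hd : d ∈ ℬ g) (hd0 : d ≠ 0)
    (hed : e * d = d) (hde : d * e = d) : ∃ a ∈ ℬ g⁻¹, a * d = e := by
  have hdV : d ∈ V := hde ▸ hV.isGradedLeftIdeal.mul_mem d e heV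
  obtain ⟨r, -, hr⟩ := hV.le_map_mulRight hmul isGradedLeftIdeal_top hd hdV
    (Submodule.mem_top (x := e)) (by rwa [hed]) heV
  refine ⟨_, SetLike.coe_mem (decompose ℬ r g⁻¹), ?_⟩
  rw [← coe_decompose_mul_mul_of_right_mem ℬ hmul hd, inv_mul_cancel,
    ← LinearMap.mulRight_apply F, hr, decompose_of_mem_same ℬ he]

end IsMinimalGradedLeftIdeal

end GradedLeftIdeal

section Corner

variable {R : Type*} [NonUnitalRing R] {e : R} (hee : IsIdempotentElem e)

/-- The Peirce projection `r ↦ e * r * e` of a ring onto its corner ring. -/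
def toCorner : R →+ hee.Corner where
  toFun r := ⟨e * r * e, r, rfl⟩
  map_zero' := Subtype.ext (show e * 0 * e = 0 by rw [mul_zero, zero_mul])
  map_add' r s := Subtype.ext (show e * (r + s) * e = e * r * e + e * s * e by
    rw [mul_add, add_mul])

theorem nontrivial_corner (he0 : e ≠ 0) : Nontrivial hee.Corner :=
  ⟨1, 0, fun h ↦ he0 congr(($h).1)⟩

theorem toCorner_coe (x : hee.Corner) : toCorner hee x.1 = x := by
  obtain ⟨hex, hxe⟩ := (Subsemigroup.mem_corner_iff hee).1 x.2
  exact Subtype.ext (show e * x.1 * e = x.1 by rw [hex, hxe])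

theorem toCorner_mul_coe (r : R) (x : hee.Corner) :
    toCorner hee (r * x.1) = toCorner hee r * x := by
  obtain ⟨hex, hxe⟩ := (Subsemigroup.mem_corner_iff hee).1 x.2
  refine Subtype.ext (show e * (r * x.1) * e = e * r * e * x.1 from ?_)
  rw [mul_assoc, mul_assoc r, hxe, mul_assoc (e * r), hex, mul_assoc]

theorem toCorner_eq_zero_of_jacobson_eq_bot (hjac : Ring.jacobson hee.Corner = ⊥)
    {I : TwoSidedIdeal R} (hI : ∀ x ∈ I, ∃ y, x + y + y * x = 0) {x : R} (hx : x ∈ I) :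
    toCorner hee x = 0 := by
  suffices hz : toCorner hee x ∈ Ring.jacobson hee.Corner from Ideal.mem_bot.1 (hjac ▸ hz)
  rw [← Ideal.jacobson_bot, Ideal.mem_jacobson_iff]
  intro y
  set z := y * toCorner hee x with hz
  obtain ⟨w, hw⟩ : ∃ w, z.1 + w + w * z.1 = 0 :=
    hI _ (I.mul_mem_left _ _ (I.mul_mem_right _ _ (I.mul_mem_left _ _ hx)))
  have hzw : z + toCorner hee w + toCorner hee w * z = 0 := by
    rw [← toCorner_mul_coe, ← map_zero (toCorner hee), ← hw, map_add, map_add, toCorner_coe]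
  refine ⟨1 + toCorner hee w, Ideal.mem_bot.2 ?_⟩
  rw [← hzw, mul_assoc, ← hz]
  noncomm_ring

theorem isUnit_natCast_corner {F : Type*} [DivisionRing F] [Module F R] {n : ℕ}
    (hn : (n : F) ≠ 0) : IsUnit (n : hee.Corner) := by
  have mul_eq_one : (n : hee.Corner) * toCorner hee ((n : F)⁻¹ • e) = 1 := by
    rw [← nsmul_eq_mul, ← map_nsmul, ← Nat.cast_smul_eq_nsmul F, smul_inv_smul₀ hn]
    exact toCorner_coe hee 1
  exact isUnit_iff_exists.2 ⟨_, mul_eq_one, (Nat.commute_cast _ n).eq.trans mul_eq_one⟩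

variable {G F : Type*} [Ring F] [Module F R]

/-- The elements of degree `g` in the corner ring `e * R * e` of a graded ring `R = ⨁ g, ℬ g`. -/
def cornerComponent (ℬ : G → Submodule F R) (g : G) : AddSubgroup hee.Corner where
  carrier := {x | x.1 ∈ ℬ g}
  zero_mem' := (ℬ g).zero_mem
  add_mem' := (ℬ g).add_mem
  neg_mem' := (ℬ g).neg_mem

variable [Group G] {ℬ : G → Submodule F R}

theorem toCorner_mem_cornerComponent (hmul : ∀ g h, ∀ x ∈ ℬ g, ∀ y ∈ ℬ h, x * y ∈ ℬ (g * h))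
    (he : e ∈ ℬ 1) {g : G} {r : R} (hr : r ∈ ℬ g) : toCorner hee r ∈ cornerComponent hee ℬ g :=
  show e * r * e ∈ ℬ g by simpa using hmul _ _ _ (hmul _ _ _ he _ hr) _ he

variable [DecidableEq G] [Decomposition ℬ]

theorem iSup_cornerComponent (hmul : ∀ g h, ∀ x ∈ ℬ g, ∀ y ∈ ℬ h, x * y ∈ ℬ (g * h))
    (he : e ∈ ℬ 1) : ⨆ g, cornerComponent hee ℬ g = ⊤ := by
  refine eq_top_iff.2 fun x _ ↦ toCorner_coe hee x ▸ ?_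
  induction x.1 using Decomposition.inductionOn ℬ with
  | zero => exact map_zero (toCorner hee) ▸ zero_mem _
  | @homogeneous g r =>
    exact AddSubgroup.mem_iSup_of_mem g (toCorner_mem_cornerComponent hee hmul he r.2)
  | add r s hr hs => exact map_add (toCorner hee) r s ▸ add_mem hr hs

theorem finite_support_of_isGradedDivisionRing_corner [IsNoetherian F R] (he0 : e ≠ 0)
    (hD : IsGradedDivisionRing (cornerComponent hee ℬ)) : Finite hD.support := by
  have := nontrivial_corner hee he0
  refine (WellFoundedGT.finite_ne_bot_of_iSupIndep
    (Decomposition.isInternal ℬ).submodule_iSupIndep).subset ?_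
  rintro g ⟨u, hu, -⟩
  exact (Submodule.ne_bot_iff _).2 ⟨_, hu, fun h ↦ u.ne_zero (Subtype.ext h)⟩

end Corner

theorem IsMinimalGradedLeftIdeal.isGradedDivisionRing_corner {G F R : Type*} [Group G]
    [DecidableEq G] [CommRing F] [NonUnitalRing R] [Module F R] [IsScalarTower F R R]
    {ℬ : G → Submodule F R} [Decomposition ℬ] {V : Submodule F R} {e : R}
    (hV : IsMinimalGradedLeftIdeal ℬ V)
    (hmul : ∀ g h, ∀ x ∈ ℬ g, ∀ y ∈ ℬ h, x * y ∈ ℬ (g * h)) (he : e ∈ ℬ 1) (heV : e ∈ V)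
    (hee : IsIdempotentElem e) : IsGradedDivisionRing (cornerComponent hee ℬ) where
  one_mem := he
  mul_mem hx hy := hmul _ _ _ hx _ hy
  iSup_eq_top := iSup_cornerComponent hee hmul he
  exists_left_inv {g d} hd hd0 := by
    obtain ⟨hed, hde⟩ := (Subsemigroup.mem_corner_iff hee).1 d.2
    obtain ⟨a, ha, had⟩ :=
      hV.exists_left_inv hmul he heV hd (fun h ↦ hd0 (Subtype.ext h)) hed hde
    refine ⟨toCorner hee a, toCorner_mem_cornerComponent hee hmul he ha, ?_⟩
    rw [← toCorner_mul_coe, had]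
    exact toCorner_coe hee 1

theorem natCast_ne_zero_of_ringChar_coprime {F : Type*} [NonAssocSemiring F] [Nontrivial F] {n : ℕ}
    (hn : n ≠ 0) (hchar : ringChar F = 0 ∨ (ringChar F).Coprime n) : (n : F) ≠ 0 := by
  intro h
  have hdvd := (ringChar.spec F n).1 h
  obtain h0 | hcop := hchar
  · exact hn (zero_dvd_iff.1 (h0 ▸ hdvd))
  · exact CharP.ringChar_ne_one (hcop.eq_one_of_dvd hdvd)

theorem stmt_12_general {G : Type*} [Group G] [DecidableEq G] {F : Type*} [Field F]
    {R : Type*} [NonUnitalRing R] [Module F R] [IsScalarTower F R R] [FiniteDimensional F R]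
    (ℬ : G → Submodule F R) [Decomposition ℬ] (hR : IsGradedSimple_s12 ℬ)
    (hchar : ringChar F = 0 ∨
      ∀ H : Subgroup G, Finite H → Nat.Coprime (ringChar F) (Nat.card H))
    (I : TwoSidedIdeal R) (hI : ∀ x ∈ I, ∃ y : R, x + y + y * x = 0) : I = ⊥ := by
  have : Nontrivial R := let ⟨x, y, hxy⟩ := hR.exists_mul_ne_zero; ⟨_, _, hxy⟩
  obtain ⟨V, hV⟩ := exists_isMinimalGradedLeftIdeal (ℬ := ℬ)
  obtain ⟨e, he, heV, he0, hVe⟩ := hV.exists_right_identity hR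
  have hee : IsIdempotentElem e := hVe e heV
  have := nontrivial_corner hee he0
  have hD := hV.isGradedDivisionRing_corner hR.mul_mem he heV hee
  have hfin := finite_support_of_isGradedDivisionRing_corner hee he0 hD
  have hcard : (Nat.card hD.support : F) ≠ 0 :=
    natCast_ne_zero_of_ringChar_coprime Nat.card_pos.ne' (hchar.imp_right fun h ↦ h _ hfin)
  have := hD.isSemisimpleRing (isUnit_natCast_corner hee hcard)
  exact hR.eq_bot_of_forall_mul_mul_eq_zero he he0 fun x hx ↦ congrArg Subtype.val
    (toCorner_eq_zero_of_jacobson_eq_bot hee (IsSemisimpleRing.jacobson_eq_bot _) hI hx)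

/-- A finite-dimensional graded simple algebra over an algebraically closed field whose
characteristic is zero or coprime to the order of every finite subgroup of `G` is
semiprimitive: its Jacobson radical is zero, i.e. every two-sided ideal consisting of
quasi-regular elements is zero. -/
theorem stmt_12 {G : Type*} [Group G] [DecidableEq G] {F : Type*} [Field F] [IsAlgClosed F]
    {R : Type*} [NonUnitalRing R] [Module F R] [SMulCommClass F R R] [IsScalarTower F R R]
    [FiniteDimensional F R]
    (ℬ : G → Submodule F R) [DirectSum.Decomposition ℬ]
    (hmul : ∀ g h : G, ∀ x ∈ ℬ g, ∀ y ∈ ℬ h, x * y ∈ ℬ (g * h))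
    -- `char F = 0` or `char F` is coprime to the order of every finite subgroup of `G`:
    (hchar : ringChar F = 0 ∨
      ∀ H : Subgroup G, Finite H → Nat.Coprime (ringChar F) (Nat.card H))
    -- `R` is graded simple:
    (hR2 : ∃ x y : R, x * y ≠ 0)
    (hsimple : ∀ J : TwoSidedIdeal R,
      (∀ x ∈ J, ∀ g : G, ((DirectSum.decompose ℬ x) g : R) ∈ J) → J = ⊥ ∨ J = ⊤) :
    -- `R` is semiprimitive: every quasi-regular two-sided ideal is zero.
    ∀ I : TwoSidedIdeal R,
      (∀ x ∈ I, ∃ y : R, x + y + x * y = 0 ∧ x + y + y * x = 0) → I = ⊥ :=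
  fun I hI ↦ stmt_12_general ℬ ⟨hmul, hR2, hsimple⟩ hchar I fun x hx ↦
    (hI x hx).imp fun _ ↦ And.right
end
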